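/- Let (R, m) be a d-dimensional complete Noetherian local domain of prime characteristic p with absolute integral closure R^+, and let x_1, …, x_d be a system of parameters of R. Then for every 1 ≤ n ≤ d and every y ∈ R, there exists a positive integer N_0 such that (x_1, …, x_n)R^+ = a ∩ b, where a = (x_1, …, x_n, y^{N_0})R^+ and b = (x_1, …, x_n)R^+ :_{R^+} y^{N_0}. -/

import Mathlib

open IsLocalRing TensorProduct
set_option synthInstance.maxHeartbeats 1000000
set_option maxHeartbeats 1000000

/-- The absolute integral closure `R⁺` of a domain `R`: the integral closure of `R`
in an algebraic closure of its fraction field. -/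
noncomputable abbrev RPlus (R : Type) [CommRing R] [IsDomain R] : Type :=
  ↥(integralClosure R (AlgebraicClosure (FractionRing R)))

/-- A system of parameters of a local ring: `d` elements generating an ideal whose
radical is the maximal ideal, where `d` is the Krull dimension. -/
def IsSOP (R : Type) [CommRing R] [IsLocalRing R] {d : ℕ} (x : Fin d → R) : Prop :=
  ringKrullDim R = d ∧ (Ideal.span (Set.range x)).radical = maximalIdeal R

/-!
Put `J = (x₁, …, xₙ)` and let `N` be such that the ideals `J : yᵏ` are constant for `k ≥ N`. By
prime avoidance some `z = s + r * y ^ N` with `s * y ^ N ∈ J` lies outside all minimal primes of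
`J`. If `z` is not a unit, it extends `x₁, …, xₙ` to a system of parameters, so `z` is regular
modulo `J R⁺` as soon as systems of parameters of `R` are regular sequences on `R⁺`. Then
`u * y ^ (2 * N) ∈ J R⁺` implies `z * (u * y ^ N) ∈ J R⁺`, hence `u * y ^ N ∈ J R⁺`, which is the
claimed decomposition.

For the regularity, `R` is module-finite over a power series ring `A` in the parameters, and `R⁺`
is the integral closure of `A` in an algebraically closed field, so it suffices that this closure
is flat over `A`. By induction on the height of primes, one may pass to a localization `B` of `A`
over whose punctured spectrum the closure `B⁺` is flat. There, suitable elements of the maximal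
ideal times the inclusion of a finite subextension into `B⁺` factor through free modules. Hence a
colon relation on a maximal regular sequence of `B`, and all its Frobenius powers, are killed
modulo the sequence by a common power of the maximal ideal. Noetherianity then yields an equation
`θ ^ p ^ s = ∑ i < s, aᵢ * θ ^ p ^ i + c` whose root in `B⁺` trivializes the relation, so that
maximal regular sequences of `B` are regular on `B⁺`. As `B⁺` has finite flat dimension over `B`,
this forces flatness, as in the Auslander–Buchsbaum formula.
-/

universe u

/-! ### Regular families of powers -/

lemma mem_span_image_range_iff {R M : Type*} [Semiring R] [AddCommMonoid M] [Module R M]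
    (f : ℕ → M) (n : ℕ) (w : M) :
    w ∈ Submodule.span R (f '' (Finset.range n : Set ℕ)) ↔
      ∃ c : ℕ → R, w = ∑ i ∈ Finset.range n, c i • f i := by
  rw [Submodule.mem_span_image_finset_iff_exists_fun]
  constructor
  · rintro ⟨c, rfl⟩
    refine ⟨fun i => if h : i ∈ Finset.range n then c ⟨i, h⟩ else 0, ?_⟩
    rw [← Finset.sum_coe_sort (Finset.range n)]
    exact Finset.sum_congr rfl fun i _ => by simp only [dif_pos i.2]
  · rintro ⟨c, rfl⟩
    exact ⟨fun i => c i, Finset.sum_coe_sort (Finset.range n) fun i => c i • f i⟩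

section PowerIdeal

variable {T E : Type*} [CommRing T]

/-- The ideal generated by the elements `pw i (e i)`, `i ∈ J`. Here `pw i e` stands for the power
`zᵢ ^ e` of the `i`-th member of some sequence; the exponents live in an arbitrary monoid `E`
because sequences of powers with varying exponents are used as well. -/
def powerIdeal (pw : ℕ → E → T) (J : Finset ℕ) (e : ℕ → E) : Ideal T :=
  Ideal.span ((fun i => pw i (e i)) '' (J : Set ℕ))

/-- Each power of the `j`-th element, `j < n`, is a nonzerodivisor modulo any powers of its
predecessors. -/
def IsPowerRegular (pw : ℕ → E → T) (n : ℕ) : Prop :=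
  ∀ j < n, ∀ (e : ℕ → E) (b : E) (w : T),
    pw j b * w ∈ powerIdeal pw (Finset.range j) e → w ∈ powerIdeal pw (Finset.range j) e

variable {pw : ℕ → E → T}

lemma powerIdeal_congr {J : Finset ℕ} {e e' : ℕ → E} (h : ∀ i ∈ J, e i = e' i) :
    powerIdeal pw J e = powerIdeal pw J e' :=
  congrArg Ideal.span (Set.image_congr fun i hi => by rw [h i hi])

lemma powerIdeal_mono {J K : Finset ℕ} {e : ℕ → E} (h : J ⊆ K) :
    powerIdeal pw J e ≤ powerIdeal pw K e :=
  Ideal.span_mono (Set.image_mono (Finset.coe_subset.2 h))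

lemma mem_powerIdeal_of_mem {J : Finset ℕ} {i : ℕ} (h : i ∈ J) (e : ℕ → E) :
    pw i (e i) ∈ powerIdeal pw J e :=
  Ideal.subset_span ⟨i, h, rfl⟩

lemma mem_powerIdeal_insert {J : Finset ℕ} {e : ℕ → E} {j : ℕ} {w : T} :
    w ∈ powerIdeal pw (insert j J) e ↔ ∃ t, ∃ v ∈ powerIdeal pw J e, w = t * pw j (e j) + v := by
  rw [powerIdeal, Finset.coe_insert, Set.image_insert_eq, Ideal.mem_span_insert]
  rfl

lemma mem_powerIdeal_range {n j : ℕ} (h : j < n) {e : ℕ → E} {w : T} :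
    w ∈ powerIdeal pw (Finset.range n) e ↔
      ∃ t, ∃ v ∈ powerIdeal pw ((Finset.range n).erase j) e, w = t * pw j (e j) + v := by
  rw [← mem_powerIdeal_insert, Finset.insert_erase (Finset.mem_range.2 h)]

lemma map_mem_powerIdeal {T' E' : Type*} [CommRing T'] {pw' : ℕ → E' → T'} (φ : T →+* T')
    {J : Finset ℕ} {e : ℕ → E} {e' : ℕ → E'} (hφ : ∀ i, φ (pw i (e i)) = pw' i (e' i)) {w : T}
    (hw : w ∈ powerIdeal pw J e) : φ w ∈ powerIdeal pw' J e' := by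
  have hmap := Ideal.mem_map_of_mem φ hw
  rw [powerIdeal, Ideal.map_span, Set.image_image] at hmap
  simp only [hφ] at hmap
  exact hmap

lemma powerIdeal_erase_update {J : Finset ℕ} (j : ℕ) (e : ℕ → E) (b : E) :
    powerIdeal pw (J.erase j) (Function.update e j b) = powerIdeal pw (J.erase j) e :=
  powerIdeal_congr fun _ hi => Function.update_of_ne (Finset.ne_of_mem_erase hi) _ _

namespace IsPowerRegular

variable {n : ℕ}

lemma mono {m : ℕ} (h : IsPowerRegular pw n) (hm : m ≤ n) : IsPowerRegular pw m :=
  fun j hj => h j (hj.trans_le hm)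

lemma erase (h : IsPowerRegular pw n) {j : ℕ} (hj : j < n) (e : ℕ → E) (b : E) (w : T)
    (hw : pw j b * w ∈ powerIdeal pw ((Finset.range n).erase j) e) :
    w ∈ powerIdeal pw ((Finset.range n).erase j) e := by
  induction n generalizing w with
  | zero => omega
  | succ n ih =>
    rcases Nat.lt_succ_iff_lt_or_eq.1 hj with hjn | rfl
    · have herase : (Finset.range (n + 1)).erase j = insert n ((Finset.range n).erase j) := by
        rw [Finset.range_add_one, Finset.erase_insert_of_ne (by omega)]
      rw [herase] at hw ⊢
      obtain ⟨s, v, hv, hs⟩ := mem_powerIdeal_insert.1 hw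
      have hns : pw n (e n) * s ∈ powerIdeal pw (Finset.range n) (Function.update e j b) := by
        rw [mem_powerIdeal_range hjn, powerIdeal_erase_update, Function.update_self]
        exact ⟨w, -v, neg_mem hv, by linear_combination -hs⟩
      have hs_mem := h n (by omega) _ _ _ hns
      rw [mem_powerIdeal_range hjn, powerIdeal_erase_update, Function.update_self] at hs_mem
      obtain ⟨t, v', hv', hs'⟩ := hs_mem
      have hwt : w - t * pw n (e n) ∈ powerIdeal pw ((Finset.range n).erase j) e := by
        apply ih (h.mono (by omega)) hjn
        have : pw j b * (w - t * pw n (e n)) = v + v' * pw n (e n) := by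
          linear_combination hs + pw n (e n) * hs'
        rw [this]
        exact add_mem hv (Ideal.mul_mem_right _ _ hv')
      exact mem_powerIdeal_insert.2 ⟨t, _, hwt, by ring⟩
    · rw [Finset.range_add_one, Finset.erase_insert Finset.notMem_range_self] at hw ⊢
      exact h j (by omega) e b w hw

end IsPowerRegular

variable [Add E]

/-- The exponents `e`, raised by `c` at the indices below `k`. -/
def raiseBelow (k : ℕ) (e c : ℕ → E) : ℕ → E := fun i => if i < k then e i + c i else e i

lemma raiseBelow_zero (e c : ℕ → E) : raiseBelow 0 e c = e := rfl

lemma raiseBelow_succ (k : ℕ) (e c : ℕ → E) :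
    raiseBelow (k + 1) e c =
      Function.update (raiseBelow k e c) k (raiseBelow k e c k + c k) := by
  funext i
  rcases eq_or_ne i k with rfl | hi
  · simp [raiseBelow]
  · have : i < k + 1 ↔ i < k := by omega
    simp only [Function.update_of_ne hi, raiseBelow, this]

lemma powerIdeal_raiseBelow (n : ℕ) (e c : ℕ → E) :
    powerIdeal pw (Finset.range n) (raiseBelow n e c) = powerIdeal pw (Finset.range n) (e + c) :=
  powerIdeal_congr fun _ hi => if_pos (Finset.mem_range.1 hi)

lemma prod_mul_mem_powerIdeal_raiseBelow (hadd : ∀ i a b, pw i (a + b) = pw i a * pw i b)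
    {n : ℕ} (k : ℕ) (e c : ℕ → E) {w : T} (hw : w ∈ powerIdeal pw (Finset.range n) e) :
    (∏ i ∈ Finset.range k, pw i (c i)) * w ∈
      powerIdeal pw (Finset.range n) (raiseBelow k e c) := by
  suffices h : powerIdeal pw (Finset.range n) e ≤
      Submodule.comap (LinearMap.mulLeft T (∏ i ∈ Finset.range k, pw i (c i)))
        (powerIdeal pw (Finset.range n) (raiseBelow k e c)) from h hw
  refine Ideal.span_le.2 ?_
  rintro _ ⟨i, hi, rfl⟩
  have hgen := mem_powerIdeal_of_mem (pw := pw) hi (raiseBelow k e c)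
  change _ * pw i (e i) ∈ powerIdeal pw (Finset.range n) (raiseBelow k e c)
  by_cases hik : i < k
  · rw [raiseBelow, if_pos hik, hadd] at hgen
    rw [← Finset.mul_prod_erase _ _ (Finset.mem_range.2 hik)]
    convert Ideal.mul_mem_left _ (∏ x ∈ (Finset.range k).erase i, pw x (c x)) hgen using 1
    ring
  · rw [raiseBelow, if_neg hik] at hgen
    exact Ideal.mul_mem_left _ _ hgen

namespace IsPowerRegular

variable {n : ℕ}

lemma mem_of_mul_mem_update (hadd : ∀ i a b, pw i (a + b) = pw i a * pw i b)
    (h : IsPowerRegular pw n) {j : ℕ} (hj : j < n) (e : ℕ → E) (c : E) {w : T}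
    (hw : pw j c * w ∈ powerIdeal pw (Finset.range n) (Function.update e j (e j + c))) :
    w ∈ powerIdeal pw (Finset.range n) e := by
  rw [mem_powerIdeal_range hj, powerIdeal_erase_update, Function.update_self, hadd] at hw
  obtain ⟨t, v, hv, hs⟩ := hw
  refine (mem_powerIdeal_range hj).2 ⟨t, w - t * pw j (e j), h.erase hj e c _ ?_, by ring⟩
  convert hv using 1
  linear_combination hs

lemma mem_of_prod_mul_mem_raiseBelow (hadd : ∀ i a b, pw i (a + b) = pw i a * pw i b)
    (h : IsPowerRegular pw n) {k : ℕ} (hk : k ≤ n) (e c : ℕ → E) {w : T}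
    (hw : (∏ i ∈ Finset.range k, pw i (c i)) * w ∈
      powerIdeal pw (Finset.range n) (raiseBelow k e c)) :
    w ∈ powerIdeal pw (Finset.range n) e := by
  induction k generalizing w with
  | zero => simpa only [Finset.range_zero, Finset.prod_empty, one_mul, raiseBelow_zero] using hw
  | succ k ih =>
    apply ih (by omega)
    rw [raiseBelow_succ, Finset.prod_range_succ] at hw
    apply h.mem_of_mul_mem_update hadd (j := k) (by omega) _ (c k)
    convert hw using 1
    ring

lemma exists_sub_mul_mem (hadd : ∀ i a b, pw i (a + b) = pw i a * pw i b)
    (h : IsPowerRegular pw n) {k : ℕ} (hk : k < n) (e : ℕ → E) {a b : E} (he : e k = a + b)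
    {v : T} (hv : pw k b * v ∈ powerIdeal pw (Finset.range n) e) :
    ∃ t, v - pw k a * t ∈ powerIdeal pw (Finset.range n) e := by
  obtain ⟨t, u, hu, hs⟩ := (mem_powerIdeal_range hk).1 hv
  rw [he, hadd] at hs
  refine ⟨t, powerIdeal_mono (Finset.erase_subset _ _) (h.erase hk e b _ ?_)⟩
  convert hu using 1
  linear_combination hs

end IsPowerRegular

end PowerIdeal

lemma IsPowerRegular.exists_sub_prod_mul_mem {T E : Type*} [CommRing T] [AddCommMonoid E]
    {pw : ℕ → E → T} (hadd : ∀ i a b, pw i (a + b) = pw i a * pw i b) {n : ℕ}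
    (h : IsPowerRegular pw n) (a N : ℕ → E) (w : T)
    (hw : ∀ i < n, pw i (N i) * w ∈ powerIdeal pw (Finset.range n) (a + N)) :
    ∃ v, w - (∏ i ∈ Finset.range n, pw i (a i)) * v ∈ powerIdeal pw (Finset.range n) (a + N) := by
  suffices ∀ k ≤ n, ∃ v, w - (∏ i ∈ Finset.range k, pw i (a i)) * v ∈
      powerIdeal pw (Finset.range n) (a + N) from this n le_rfl
  intro k hk
  induction k with
  | zero => exact ⟨w, by simp⟩
  | succ k ih =>
    obtain ⟨v, hv⟩ := ih (by omega)
    let e : ℕ → E := fun i => if i < k then N i else a i + N i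
    have he : powerIdeal pw (Finset.range n) (raiseBelow k e a) =
        powerIdeal pw (Finset.range n) (a + N) :=
      powerIdeal_congr fun i _ => by
        simp only [raiseBelow, e, Pi.add_apply]
        split_ifs
        exacts [add_comm _ _, rfl]
    have hkv : pw k (N k) * v ∈ powerIdeal pw (Finset.range n) e := by
      apply h.mem_of_prod_mul_mem_raiseBelow hadd (by omega : k ≤ n) e a
      rw [he]
      convert sub_mem (hw k (by omega)) (Ideal.mul_mem_left _ (pw k (N k)) hv) using 1
      ring
    obtain ⟨t, ht⟩ := h.exists_sub_mul_mem hadd (by omega) e (if_neg (lt_irrefl k)) hkv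
    have hprod := prod_mul_mem_powerIdeal_raiseBelow hadd k e a ht
    rw [he] at hprod
    refine ⟨t, ?_⟩
    convert add_mem hv hprod using 1
    rw [Finset.prod_range_succ]
    ring

/-! ### Sequences in a common finite extension -/

section SeqSubalgebra

variable (B L : Type*) [CommRing B] [CommRing L] [Algebra B L]

/-- The sequences in `L` whose terms all lie in one module-finite `B`-subalgebra of `L`. Colon
relations in this ring are colon relations over `B⁺` that hold uniformly in the exponents. -/
def finiteSeqSubalgebra : Subalgebra B (ℕ → L) where
  carrier := {w | ∃ R : Subalgebra B L, Module.Finite B R ∧ ∀ i, w i ∈ R}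
  mul_mem' := by
    rintro a b ⟨R, hR, ha⟩ ⟨R', hR', hb⟩
    exact ⟨R ⊔ R', Subalgebra.finite_sup R R', fun i =>
      mul_mem ((le_sup_left : R ≤ R ⊔ R') (ha i)) ((le_sup_right : R' ≤ R ⊔ R') (hb i))⟩
  add_mem' := by
    rintro a b ⟨R, hR, ha⟩ ⟨R', hR', hb⟩
    exact ⟨R ⊔ R', Subalgebra.finite_sup R R', fun i =>
      add_mem ((le_sup_left : R ≤ R ⊔ R') (ha i)) ((le_sup_right : R' ≤ R ⊔ R') (hb i))⟩
  algebraMap_mem' := fun r => ⟨⊥, inferInstance, fun _ => Subalgebra.algebraMap_mem _ _⟩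

variable {B L}

lemma mem_finiteSeqSubalgebra_of_mem_adjoin {s : Finset L} (hs : ∀ x ∈ s, IsIntegral B x)
    {w : ℕ → L} (hw : ∀ i, w i ∈ Algebra.adjoin B (s : Set L)) : w ∈ finiteSeqSubalgebra B L :=
  ⟨_, Module.Finite.iff_fg.2 (fg_adjoin_of_finite s.finite_toSet hs), hw⟩

variable (B L) in
/-- Evaluation of a sequence at `ι`. -/
def evalSeq (ι : ℕ) : finiteSeqSubalgebra B L →+* integralClosure B L where
  toFun w := ⟨w.1 ι, by
    obtain ⟨R, _, h⟩ := w.2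
    exact (IsIntegral.of_finite B (⟨w.1 ι, h ι⟩ : R)).map R.val⟩
  map_one' := rfl
  map_mul' _ _ := rfl
  map_zero' := rfl
  map_add' _ _ := rfl

variable (B L) in
/-- The constant sequences. -/
def constSeq : integralClosure B L →+* finiteSeqSubalgebra B L where
  toFun x := ⟨fun _ => x.1, _, Module.Finite.iff_fg.2 (IsIntegral.fg_adjoin_singleton x.2),
    fun _ => Algebra.self_mem_adjoin_singleton B x.1⟩
  map_one' := rfl
  map_mul' _ _ := rfl
  map_zero' := rfl
  map_add' _ _ := rfl

lemma evalSeq_constSeq (ι : ℕ) (x : integralClosure B L) : evalSeq B L ι (constSeq B L x) = x :=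
  rfl

lemma exists_finite_subalgebra_forall_mem (c : ℕ → finiteSeqSubalgebra B L) (n : ℕ)
    (w : finiteSeqSubalgebra B L) :
    ∃ R : Subalgebra B L, Module.Finite B R ∧ (∀ ι, w.1 ι ∈ R) ∧
      ∀ i < n, ∀ ι, (c i).1 ι ∈ R := by
  induction n with
  | zero =>
    obtain ⟨R, hR, hw⟩ := w.2
    exact ⟨R, hR, hw, by simp⟩
  | succ n ih =>
    obtain ⟨R, hR, hw, hc⟩ := ih
    obtain ⟨R', hR', hcn⟩ := (c n).2
    refine ⟨R ⊔ R', Subalgebra.finite_sup R R',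
      fun ι => (le_sup_left : R ≤ R ⊔ R') (hw ι), fun i hi ι => ?_⟩
    rcases Nat.lt_succ_iff_lt_or_eq.1 hi with hi | rfl
    · exact (le_sup_left : R ≤ R ⊔ R') (hc i hi ι)
    · exact (le_sup_right : R' ≤ R ⊔ R') (hcn ι)

variable (L) in
/-- The powers `z i ^ e` in a `B`-algebra. -/
def algebraPow (z : ℕ → B) (i e : ℕ) : L := algebraMap B L (z i) ^ e

lemma algebraPow_add (z : ℕ → B) (i a b : ℕ) :
    algebraPow L z i (a + b) = algebraPow L z i a * algebraPow L z i b :=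
  pow_add _ _ _

variable (L) in
/-- The sequence `ι ↦ z i ^ e ι` of powers of `z i` with varying exponents. -/
def seqPow (z : ℕ → B) (i : ℕ) (e : ℕ → ℕ) : finiteSeqSubalgebra B L :=
  ⟨fun ι => algebraPow L z i (e ι), ⊥, inferInstance,
    fun _ => pow_mem (Subalgebra.algebraMap_mem _ _) _⟩

lemma seqPow_add (z : ℕ → B) (i : ℕ) (a b : ℕ → ℕ) :
    seqPow L z i (a + b) = seqPow L z i a * seqPow L z i b :=
  Subtype.ext (funext fun _ => pow_add _ _ _)

lemma evalSeq_seqPow (z : ℕ → B) (i : ℕ) (e : ℕ → ℕ) (ι : ℕ) :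
    evalSeq B L ι (seqPow L z i e) = algebraPow (integralClosure B L) z i (e ι) :=
  Subtype.ext (by simp [evalSeq, seqPow, algebraPow])

lemma constSeq_algebraPow (z : ℕ → B) (i e : ℕ) :
    constSeq B L (algebraPow (integralClosure B L) z i e) = seqPow L z i (fun _ => e) :=
  Subtype.ext (by simp [constSeq, seqPow, algebraPow])

lemma IsPowerRegular.of_seqPow {z : ℕ → B} {n : ℕ} (h : IsPowerRegular (seqPow L z) n) :
    IsPowerRegular (algebraPow (integralClosure B L) z) n := by
  intro j hj e b w hw
  have hconst := map_mem_powerIdeal (pw' := seqPow L z) (e' := fun i _ => e i) (constSeq B L)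
    (fun i => constSeq_algebraPow z i (e i)) hw
  rw [map_mul, constSeq_algebraPow] at hconst
  have heval := map_mem_powerIdeal (pw' := algebraPow (integralClosure B L) z) (e' := e)
    (evalSeq B L 0) (fun i => evalSeq_seqPow z i _ 0) (h j hj _ _ _ hconst)
  rwa [evalSeq_constSeq] at heval

lemma mem_powerIdeal_seqPow {z : ℕ → B} {n : ℕ} {a : ℕ → ℕ → ℕ} {w : finiteSeqSubalgebra B L} :
    w ∈ powerIdeal (seqPow L z) (Finset.range n) a ↔
      ∃ c : ℕ → finiteSeqSubalgebra B L, ∀ ι, w.1 ι = ∑ i ∈ Finset.range n,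
        (c i).1 ι * algebraPow L z i (a i ι) := by
  refine (mem_span_image_range_iff (fun i => seqPow L z i (a i)) n w).trans
    (exists_congr fun c => ?_)
  rw [Subtype.ext_iff, funext_iff]
  refine forall_congr' fun ι => ?_
  rw [AddSubmonoidClass.coe_finsetSum, Finset.sum_apply]
  rfl

end SeqSubalgebra

/-! ### Factoring inclusions through free modules -/

section FreeFactor

variable {B L : Type*} [CommRing B] [CommRing L] [Algebra B L]

/-- The ideal of those `c : B` such that `c` times the inclusion `R → L` factors as
`R → Bᵐ → integralClosure B L ⊆ L`, written out as a finite sum of rank one maps `f j · s j`. -/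
def freeFactorIdeal (R : Subalgebra B L) : Ideal B where
  carrier := {c | ∃ m : ℕ, ∃ f : Fin m → (R →ₗ[B] B), ∃ s : Fin m → L,
    (∀ j, IsIntegral B (s j)) ∧
      ∀ r : R, algebraMap B L c * r = ∑ j, algebraMap B L (f j r) * s j}
  zero_mem' := ⟨0, Fin.elim0, Fin.elim0, fun j => j.elim0, by simp⟩
  add_mem' := by
    rintro a b ⟨m, f, s, hs, h⟩ ⟨m', f', s', hs', h'⟩
    refine ⟨m + m', Fin.append f f', Fin.append s s', fun j => ?_, fun r => ?_⟩
    · refine Fin.addCases (fun i => ?_) (fun i => ?_) j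
      · simpa only [Fin.append_left] using hs i
      · simpa only [Fin.append_right] using hs' i
    · simp only [Fin.sum_univ_add, Fin.append_left, Fin.append_right, map_add, add_mul, h, h']
  smul_mem' := by
    rintro a b ⟨m, f, s, hs, h⟩
    refine ⟨m, fun j => a • f j, s, hs, fun r => ?_⟩
    simp only [LinearMap.smul_apply, smul_eq_mul, map_mul, mul_assoc, ← Finset.mul_sum, h]

lemma exists_notMem_mem_freeFactorIdeal [IsNoetherianRing B] (R : Subalgebra B L)
    [Module.Finite B R] (Q : Ideal B) [Q.IsPrime]
    [Module.Flat B (LocalizedModule Q.primeCompl (integralClosure B L))] :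
    ∃ c ∉ Q, c ∈ freeFactorIdeal R := by
  let S := integralClosure B L
  have hle : R ≤ S := fun x hx => (IsIntegral.of_finite B (⟨x, hx⟩ : R)).map R.val
  let φ : R →ₗ[B] S := (Subalgebra.inclusion hle).toLinearMap
  let ℓ := LocalizedModule.mkLinearMap Q.primeCompl S
  have : Module.FinitePresentation B R := Module.finitePresentation_of_finite B R
  obtain ⟨k, f, g, hfg⟩ := Module.Flat.exists_factorization_of_finitePresentation
    (P := R) (ℓ.comp φ)
  obtain ⟨t, ht⟩ := IsLocalizedModule.exist_integer_multiples_of_finite Q.primeCompl ℓ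
    (fun j : Fin k => g (Finsupp.single j 1))
  choose s hs using fun j : Fin k => (ht j : ∃ s : S, ℓ s = t • g (Finsupp.single j 1))
  let g' : R →ₗ[B] S := ∑ j, ((Finsupp.lapply j).comp f).smulRight (s j)
  have hlocal : ℓ ∘ₗ (t.1 • φ) = ℓ ∘ₗ g' := by
    ext r
    have hφ : ℓ (φ r) = ∑ j, f r j • g (Finsupp.single j 1) := by
      rw [show ℓ (φ r) = g (f r) from LinearMap.congr_fun hfg r]
      conv_lhs => rw [← Finsupp.univ_sum_single (f r), map_sum]
      exact Finset.sum_congr rfl fun j _ => by rw [← map_smul, Finsupp.smul_single_one]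
    simp only [g', LinearMap.comp_apply, LinearMap.smul_apply, map_smul, hφ, LinearMap.sum_apply,
      LinearMap.smulRight_apply, Finsupp.lapply_apply, map_sum, hs, Finset.smul_sum]
    exact Finset.sum_congr rfl fun j _ => smul_comm _ _ _
  obtain ⟨c, hc⟩ :=
    Module.Finite.exists_smul_of_comp_eq_of_isLocalizedModule Q.primeCompl ℓ _ _ hlocal
  refine ⟨c.1 * t.1, (c * t).2, k, fun j => (Finsupp.lapply j).comp f, fun j => c.1 • (s j).1,
    fun j => (s j).2.smul c.1, fun r => ?_⟩
  have hr := congrArg Subtype.val (LinearMap.congr_fun hc r)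
  simpa [g', φ, Submonoid.smul_def, Algebra.smul_def, Finset.mul_sum, mul_assoc, mul_left_comm]
    using hr

lemma mem_radical_freeFactorIdeal_of_flat [IsNoetherianRing B] [IsLocalRing B]
    (hloc : ∀ (Q : Ideal B) [Q.IsPrime], Q ≠ maximalIdeal B →
      Module.Flat B (LocalizedModule Q.primeCompl (integralClosure B L)))
    (R : Subalgebra B L) [Module.Finite B R] {c : B} (hc : c ∈ maximalIdeal B) :
    c ∈ (freeFactorIdeal R).radical := by
  rw [Ideal.radical_eq_sInf, Ideal.mem_sInf]
  rintro Q ⟨hle, _⟩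
  by_contra hcQ
  have := hloc Q fun h => hcQ (h ▸ hc)
  obtain ⟨t, htQ, ht⟩ := exists_notMem_mem_freeFactorIdeal R Q
  exact htQ (hle ht)

end FreeFactor

/-! ### Almost annihilated colon relations -/

section SeqColon

variable {B L : Type*} [CommRing B] [CommRing L] [Algebra B L] {z : ℕ → B} {k n : ℕ}

lemma IsPowerRegular.linearMap_mem_powerIdeal {M : Type*} [AddCommGroup M] [Module B M]
    {pw : ℕ → ℕ → B} (h : IsPowerRegular pw k) (hn : n < k) (e : ℕ → ℕ) (b : ℕ) {w : M}
    (hw : pw n b • w ∈ powerIdeal pw (Finset.range n) e • (⊤ : Submodule B M)) (f : M →ₗ[B] B) :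
    f w ∈ powerIdeal pw (Finset.range n) e := by
  refine h n hn e b (f w) ?_
  rw [← smul_eq_mul, ← map_smul]
  have hmap := Submodule.mem_map_of_mem (f := f) hw
  rw [Submodule.map_smul''] at hmap
  exact Ideal.mul_le_left (Submodule.smul_mono le_rfl le_top hmap)

lemma exists_linearMap_eq_sum_of_colon (hnk : n < k)
    (hz : IsPowerRegular (algebraPow B z) k) {a : ℕ → ℕ → ℕ} {b : ℕ → ℕ}
    {w : finiteSeqSubalgebra B L}
    (hw : seqPow L z n b * w ∈ powerIdeal (seqPow L z) (Finset.range n) a) :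
    ∃ R : Subalgebra B L, Module.Finite B R ∧ ∃ hwR : ∀ ι, w.1 ι ∈ R,
      ∀ (f : R →ₗ[B] B) (ι : ℕ), ∃ g : ℕ → B,
        f ⟨w.1 ι, hwR ι⟩ = ∑ i ∈ Finset.range n, g i * algebraPow B z i (a i ι) := by
  obtain ⟨c, hc⟩ := mem_powerIdeal_seqPow.1 hw
  obtain ⟨R, hR, hwR, hcR⟩ := exists_finite_subalgebra_forall_mem c n w
  refine ⟨R, hR, hwR, fun f ι =>
    (mem_span_image_range_iff (fun i => algebraPow B z i (a i ι)) n _).1 ?_⟩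
  refine hz.linearMap_mem_powerIdeal hnk (fun i => a i ι) (b ι) ?_ f
  have hsum : algebraPow B z n (b ι) • (⟨w.1 ι, hwR ι⟩ : R) = ∑ i : Finset.range n,
      algebraPow B z i (a i ι) • (⟨(c i).1 ι, hcR i (Finset.mem_range.1 i.2) ι⟩ : R) := by
    apply Subtype.ext
    have hι := hc ι
    rw [MulMemClass.coe_mul, Pi.mul_apply, ← Finset.sum_coe_sort] at hι
    simpa [algebraPow, seqPow, Algebra.smul_def, mul_comm] using hι
  rw [hsum]
  exact sum_mem fun i _ => Submodule.smul_mem_smul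
    (mem_powerIdeal_of_mem i.2 fun i => a i ι) trivial

lemma exists_pow_mul_mem_of_colon (hnk : n < k)
    (hz : IsPowerRegular (algebraPow B z) k) {c : ℕ}
    (hsplit : ∀ R : Subalgebra B L, Module.Finite B R → z c ∈ (freeFactorIdeal R).radical)
    {a : ℕ → ℕ → ℕ} {b : ℕ → ℕ} {w : finiteSeqSubalgebra B L}
    (hw : seqPow L z n b * w ∈ powerIdeal (seqPow L z) (Finset.range n) a) :
    ∃ N : ℕ, seqPow L z c (fun _ => N) * w ∈ powerIdeal (seqPow L z) (Finset.range n) a := by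
  classical
  obtain ⟨R, hR, hwR, hmap⟩ := exists_linearMap_eq_sum_of_colon hnk hz hw
  obtain ⟨N, m, f, s, hs, hf⟩ := hsplit R hR
  choose g hg using fun j ι => hmap (f j) ι
  have hcoeff : ∀ i, (fun ι => ∑ j, algebraMap B L (g j ι i) * s j) ∈
      finiteSeqSubalgebra B L := fun i =>
    mem_finiteSeqSubalgebra_of_mem_adjoin (s := Finset.univ.image s) (by simpa using hs)
      fun ι => sum_mem fun j _ =>
        mul_mem (Subalgebra.algebraMap_mem _ _) (Algebra.subset_adjoin (by simp))
  refine ⟨N, mem_powerIdeal_seqPow.2 ⟨fun i => ⟨_, hcoeff i⟩, fun ι => ?_⟩⟩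
  calc (seqPow L z c (fun _ => N) * w).1 ι
      = algebraMap B L (z c ^ N) * w.1 ι := by rw [map_pow]; rfl
    _ = ∑ j, ∑ i ∈ Finset.range n,
          algebraMap B L (g j ι i) * algebraPow L z i (a i ι) * s j := by
        rw [hf ⟨w.1 ι, hwR ι⟩]
        simp [hg, algebraPow, Finset.sum_mul]
    _ = _ := by
        rw [Finset.sum_comm]
        simp only [Finset.sum_mul, mul_right_comm]

lemma exists_prod_mul_sub_mem_of_colon (hnk : n < k)
    (hz : IsPowerRegular (algebraPow B z) k)
    (hsplit : ∀ i < k, ∀ R : Subalgebra B L, Module.Finite B R →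
      z i ∈ (freeFactorIdeal R).radical)
    (hseq : IsPowerRegular (seqPow L z) n) {a : ℕ → ℕ → ℕ} {b : ℕ → ℕ}
    {w : finiteSeqSubalgebra B L}
    (hw : seqPow L z n b * w ∈ powerIdeal (seqPow L z) (Finset.range n) a) :
    ∃ (N : ℕ) (v : finiteSeqSubalgebra B L),
      (∏ i ∈ Finset.range n, seqPow L z i (fun _ => N)) * w -
        (∏ i ∈ Finset.range n, seqPow L z i (a i)) * v ∈
          powerIdeal (seqPow L z) (Finset.range n) (a + fun _ _ => N) := by
  have hpow : ∀ i, ∃ N, i < n →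
      seqPow L z i (fun _ => N) * w ∈ powerIdeal (seqPow L z) (Finset.range n) a := by
    intro i
    by_cases hi : i < n
    · obtain ⟨N, hN⟩ := exists_pow_mul_mem_of_colon hnk hz (hsplit i (by omega)) hw
      exact ⟨N, fun _ => hN⟩
    · exact ⟨0, fun h => absurd h hi⟩
  choose M hM using hpow
  let N := ∑ i ∈ Finset.range n, M i
  have hN : ∀ i < n, seqPow L z i (fun _ => N) * w ∈
      powerIdeal (seqPow L z) (Finset.range n) a := by
    intro i hi
    have hle : M i ≤ N :=
      Finset.single_le_sum (f := M) (fun _ _ => Nat.zero_le _) (Finset.mem_range.2 hi)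
    have hsplitN : (fun _ => N : ℕ → ℕ) = (fun _ => N - M i) + (fun _ => M i) :=
      funext fun _ => (Nat.sub_add_cancel hle).symm
    rw [hsplitN, seqPow_add, mul_assoc]
    exact Ideal.mul_mem_left _ _ (hM i hi)
  refine ⟨N, hseq.exists_sub_prod_mul_mem (seqPow_add z) a (fun _ _ => N) _ fun i hi => ?_⟩
  have hprod := prod_mul_mem_powerIdeal_raiseBelow (seqPow_add z) n a (fun _ _ => N) (hN i hi)
  rw [powerIdeal_raiseBelow] at hprod
  convert hprod using 1
  ring

end SeqColon

/-! ### The equational argument -/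

section AdditiveEquation

open Polynomial

/-- The polynomial `X ^ (p ^ s) - (∑ i < s, a i * X ^ (p ^ i) + c)`, additive up to its constant
term in characteristic `p`. -/
noncomputable def additivePolynomial {S : Type*} [CommRing S] (p s : ℕ) (a : ℕ → S) (c : S) :
    S[X] :=
  X ^ p ^ s - (∑ i ∈ Finset.range s, C (a i) * X ^ p ^ i + C c)

variable {S L : Type*} [CommRing S] {p : ℕ} (s : ℕ) (a : ℕ → S) (c : S)

lemma degree_sum_C_mul_X_pow_pow_add_C_lt (hp : 1 < p) :
    (∑ i ∈ Finset.range s, C (a i) * X ^ p ^ i + C c).degree < (p ^ s : ℕ) := by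
  rw [← mem_degreeLT]
  refine add_mem (sum_mem fun i hi => ?_) ?_ <;> rw [mem_degreeLT]
  · refine (degree_C_mul_X_pow_le _ _).trans_lt ?_
    exact_mod_cast Nat.pow_lt_pow_right hp (Finset.mem_range.1 hi)
  · refine degree_C_le.trans_lt ?_
    exact_mod_cast pow_pos (by omega) s

lemma additivePolynomial_monic (hp : 1 < p) : (additivePolynomial p s a c).Monic :=
  monic_X_pow_sub (degree_sum_C_mul_X_pow_pow_add_C_lt s a c hp)

lemma degree_additivePolynomial [Nontrivial S] (hp : 1 < p) :
    (additivePolynomial p s a c).degree = (p ^ s : ℕ) := by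
  rw [additivePolynomial, degree_sub_eq_left_of_degree_lt, degree_X_pow]
  rw [degree_X_pow]
  exact degree_sum_C_mul_X_pow_pow_add_C_lt s a c hp

lemma aeval_additivePolynomial_eq_zero_iff [CommRing L] [Algebra S L] (x : L) :
    aeval x (additivePolynomial p s a c) = 0 ↔
      x ^ p ^ s = ∑ i ∈ Finset.range s, algebraMap S L (a i) * x ^ p ^ i + algebraMap S L c := by
  simp [additivePolynomial, sub_eq_zero]

lemma isIntegral_mul_of_additive_equation [CommRing L] [Algebra S L] (hp : 1 < p) (D : S)
    {c x : L} (hc : IsIntegral S (algebraMap S L D * c))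
    (hx : x ^ p ^ s = ∑ i ∈ Finset.range s, algebraMap S L (a i) * x ^ p ^ i + c) :
    IsIntegral S (algebraMap S L D * x) := by
  have hroot : aeval (algebraMap S L D * x) (additivePolynomial p s
      (fun i => algebraMap S (integralClosure S L) (a i * D ^ (p ^ s - p ^ i)))
      (algebraMap S (integralClosure S L) (D ^ (p ^ s - 1)) * ⟨_, hc⟩)) = 0 := by
    have hconst : algebraMap S L D ^ (p ^ s - 1) * (algebraMap S L D * c) =
        algebraMap S L D ^ p ^ s * c := by
      rw [← mul_assoc, ← pow_succ, Nat.sub_add_cancel (Nat.one_le_pow _ _ (by omega))]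
    have hcoeff : ∀ i ∈ Finset.range s,
        algebraMap S L (a i * D ^ (p ^ s - p ^ i)) * (algebraMap S L D * x) ^ p ^ i =
          algebraMap S L D ^ p ^ s * (algebraMap S L (a i) * x ^ p ^ i) := fun i hi => by
      rw [map_mul, map_pow, mul_pow, ← pow_sub_mul_pow (algebraMap S L D)
        (Nat.pow_le_pow_right (by omega) (Finset.mem_range.1 hi).le)]
      ring
    rw [aeval_additivePolynomial_eq_zero_iff, map_mul, ← IsScalarTower.algebraMap_apply, map_pow]
    simp_rw [← IsScalarTower.algebraMap_apply S (integralClosure S L) L]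
    rw [Finset.sum_congr rfl hcoeff, ← Finset.mul_sum, mul_pow, hx, mul_add]
    exact congrArg _ hconst.symm
  exact isIntegral_trans _ ⟨_, additivePolynomial_monic _ _ _ hp, hroot⟩

lemma exists_additive_equation_solution [Field L] [IsAlgClosed L] (hp : 1 < p) (a : ℕ → L)
    (c : L) : ∃ x : L, x ^ p ^ s = ∑ i ∈ Finset.range s, a i * x ^ p ^ i + c := by
  obtain ⟨x, hx⟩ := IsAlgClosed.exists_aeval_eq_zero L (additivePolynomial p s a c) <| by
    rw [degree_additivePolynomial s a c hp]
    exact_mod_cast (pow_pos (by omega) s : 0 < p ^ s).ne'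
  exact ⟨x, (aeval_additivePolynomial_eq_zero_iff s a c x).1 hx⟩

end AdditiveEquation

lemma exists_forall_eq_sum_smul_of_noetherian {B M : Type*} [Ring B] [AddCommGroup M] [Module B M]
    [IsNoetherian B M] (v : ℕ → M) :
    ∃ m : ℕ, ∀ ι, ∃ a : ℕ → B, v ι = ∑ i ∈ Finset.range m, a i • v i := by
  let f : ℕ →o Submodule B M :=
    ⟨fun n => Submodule.span B (v '' (Finset.range n : Set ℕ)), fun _ _ hab =>
      Submodule.span_mono (Set.image_mono (Finset.coe_subset.2 (Finset.range_mono hab)))⟩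
  obtain ⟨m, hm⟩ := monotone_stabilizes_iff_noetherian.2 (inferInstance : IsNoetherian B M) f
  refine ⟨m, fun ι => (mem_span_image_range_iff v m (v ι)).1 ?_⟩
  have hmem : v ι ∈ f (max m (ι + 1)) := Submodule.subset_span ⟨ι, by simp, rfl⟩
  rwa [← hm _ (le_max_left _ _)] at hmem

lemma exists_forall_coe_eq_sum_algebraMap_mul {B L : Type*} [CommRing B] [CommRing L] [Algebra B L]
    [IsNoetherianRing B] (v : finiteSeqSubalgebra B L) :
    ∃ m : ℕ, ∀ ι, ∃ a : ℕ → B, v.1 ι = ∑ i ∈ Finset.range m, algebraMap B L (a i) * v.1 i := by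
  obtain ⟨R, hR, hvR⟩ := v.2
  obtain ⟨m, hm⟩ :=
    exists_forall_eq_sum_smul_of_noetherian (B := B) fun ε => (⟨v.1 ε, hvR ε⟩ : R)
  refine ⟨m, fun ι => (hm ι).imp fun a ha => ?_⟩
  have hcoe := congrArg Subtype.val ha
  rw [AddSubmonoidClass.coe_finsetSum] at hcoe
  simpa [Algebra.smul_def] using hcoe

section EquationalArgument

variable {B L : Type*} [CommRing B] [Field L] [Algebra B L]

lemma exists_eq_sum_isIntegral_mul [IsAlgClosed L] (p : ℕ) [Fact p.Prime] [CharP L p]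
    {J : Finset ℕ} (hJ : J.Nonempty) (D : ℕ → B) {s : ℕ} {a : ℕ → B} {v : ℕ → L}
    (hv : v s = ∑ i ∈ Finset.range s, algebraMap B L (a i) * v i) {γ : ℕ → ℕ → L}
    (hγ : ∀ j ∈ J, ∀ ε ≤ s, IsIntegral B (algebraMap B L (D j) * γ j ε)) {θ : L}
    (hθ : ∀ ε, θ ^ p ^ ε = v ε + ∑ j ∈ J, γ j ε) :
    ∃ ζ : ℕ → L, (∀ j ∈ J, IsIntegral B (algebraMap B L (D j) * ζ j)) ∧ θ = ∑ j ∈ J, ζ j := by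
  have hp : 1 < p := (Fact.out : p.Prime).one_lt
  let β : ℕ → L := fun j => γ j s - ∑ ε ∈ Finset.range s, algebraMap B L (a ε) * γ j ε
  have hβ : ∀ j ∈ J, IsIntegral B (algebraMap B L (D j) * β j) := by
    intro j hj
    simp only [β, mul_sub, Finset.mul_sum]
    refine (hγ j hj s le_rfl).sub (IsIntegral.sum _ fun ε hε => ?_)
    rw [mul_left_comm]
    exact isIntegral_algebraMap.mul (hγ j hj ε (Finset.mem_range.1 hε).le)
  choose ζ hζ using fun j =>
    exists_additive_equation_solution s hp (fun i => algebraMap B L (a i)) (β j)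
  let η : L := θ - ∑ j ∈ J, ζ j
  have hη : IsIntegral B η := by
    have heq : η ^ p ^ s = ∑ i ∈ Finset.range s, algebraMap B L (a i) * η ^ p ^ i + 0 := by
      simp only [η, sub_pow_char_pow, sum_pow_char_pow, hθ, hζ, hv, β, mul_sub, mul_add,
        Finset.sum_sub_distrib, Finset.sum_add_distrib, Finset.mul_sum]
      rw [Finset.sum_comm (s := J) (f := fun j i => algebraMap B L (a i) * γ j i),
        Finset.sum_comm (s := J) (f := fun j i => algebraMap B L (a i) * ζ j ^ p ^ i)]
      ring
    have := isIntegral_mul_of_additive_equation s a hp 1 (by simpa using isIntegral_zero) heq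
    rwa [map_one, one_mul] at this
  obtain ⟨j₀, hj₀⟩ := hJ
  refine ⟨ζ + Pi.single j₀ η, fun j hj => ?_, ?_⟩
  · have hζj := isIntegral_mul_of_additive_equation s a hp (D j) (hβ j hj) (hζ j)
    rw [Pi.add_apply, mul_add]
    refine hζj.add (isIntegral_algebraMap.mul ?_)
    rw [Pi.single_apply]
    split_ifs
    exacts [hη, isIntegral_zero]
  · simp [Finset.sum_add_distrib, hj₀, η]

lemma isIntegral_prod_erase_mul_div {J : Finset ℕ} {Z : ℕ → L} (hZ : ∀ i ∈ J, Z i ≠ 0)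
    (hint : ∀ i ∈ J, IsIntegral B (Z i)) {e e' : ℕ → ℕ} (he : ∀ i ∈ J, e' i ≤ e i) {j : ℕ}
    (hj : j ∈ J) {c : L} (hc : IsIntegral B c) :
    IsIntegral B ((∏ i ∈ J.erase j, Z i ^ e i) * (c * Z j ^ e' j / ∏ i ∈ J, Z i ^ e' i)) := by
  have hsplit : ∏ i ∈ J.erase j, Z i ^ e i =
      (∏ i ∈ J.erase j, Z i ^ (e i - e' i)) * ∏ i ∈ J.erase j, Z i ^ e' i := by
    rw [← Finset.prod_mul_distrib]
    exact Finset.prod_congr rfl fun i hi =>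
      (pow_sub_mul_pow _ (he i (Finset.mem_of_mem_erase hi))).symm
  have hne : ∏ i ∈ J.erase j, Z i ^ e' i ≠ 0 :=
    Finset.prod_ne_zero_iff.2 fun i hi => pow_ne_zero _ (hZ i (Finset.mem_of_mem_erase hi))
  have hnej : Z j ^ e' j ≠ 0 := pow_ne_zero _ (hZ j hj)
  have heq : (∏ i ∈ J.erase j, Z i ^ e i) * (c * Z j ^ e' j / ∏ i ∈ J, Z i ^ e' i) =
      (∏ i ∈ J.erase j, Z i ^ (e i - e' i)) * c := by
    rw [← Finset.mul_prod_erase _ _ hj, hsplit]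
    field_simp
  rw [heq]
  exact (IsIntegral.prod _ fun i hi => (hint i (Finset.mem_of_mem_erase hi)).pow _).mul hc

lemma mem_powerIdeal_of_eq_prod_mul_sum {z : ℕ → B} {n : ℕ}
    (hreg : IsPowerRegular (algebraPow (integralClosure B L) z) n) (a e : ℕ → ℕ)
    {u : integralClosure B L} {ζ : ℕ → L}
    (hζ : ∀ j ∈ Finset.range n,
      IsIntegral B ((∏ i ∈ (Finset.range n).erase j, algebraPow L z i (e i)) * ζ j))
    (hu : (u : L) = (∏ i ∈ Finset.range n, algebraPow L z i (a i)) * ∑ j ∈ Finset.range n, ζ j) :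
    u ∈ powerIdeal (algebraPow (integralClosure B L) z) (Finset.range n) a := by
  let ξ : ℕ → integralClosure B L := fun j => if h : j ∈ Finset.range n then ⟨_, hζ j h⟩ else 0
  have hξ : ∀ j ∈ Finset.range n,
      (ξ j : L) = (∏ i ∈ (Finset.range n).erase j, algebraPow L z i (e i)) * ζ j := fun j hj => by
    simp only [ξ, dif_pos hj]
  have hcoe : ∀ i e, (algebraPow (integralClosure B L) z i e : L) = algebraPow L z i e :=
    fun i e => by simp [algebraPow]
  have heq : (∏ i ∈ Finset.range n, algebraPow (integralClosure B L) z i (e i)) * u =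
      ∑ j ∈ Finset.range n,
        (∏ i ∈ (Finset.range n).erase j, algebraPow (integralClosure B L) z i (a i)) * ξ j *
          algebraPow (integralClosure B L) z j ((a + e) j) := by
    apply Subtype.ext
    push_cast
    simp only [hcoe]
    rw [hu, Finset.mul_sum, Finset.mul_sum]
    refine Finset.sum_congr rfl fun j hj => ?_
    rw [hξ j hj, ← Finset.mul_prod_erase _ (fun i => algebraPow L z i (e i)) hj,
      ← Finset.mul_prod_erase _ (fun i => algebraPow L z i (a i)) hj, Pi.add_apply,
      algebraPow_add]
    ring
  apply hreg.mem_of_prod_mul_mem_raiseBelow (algebraPow_add z) le_rfl a e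
  rw [powerIdeal_raiseBelow, heq]
  exact sum_mem fun j hj => Ideal.mul_mem_left _ _ (mem_powerIdeal_of_mem hj (a + e))

variable (B L) in
/-- The sequence `ε ↦ x ^ (p ^ ε)` of iterated Frobenius powers. -/
def frobeniusSeq (p : ℕ) [Fact p.Prime] [CharP L p] :
    integralClosure B L →+* finiteSeqSubalgebra B L where
  toFun x := ⟨fun ε => x.1 ^ p ^ ε, _, Module.Finite.iff_fg.2 (IsIntegral.fg_adjoin_singleton x.2),
    fun _ => pow_mem (Algebra.self_mem_adjoin_singleton B x.1) _⟩
  map_one' := Subtype.ext (funext fun _ => one_pow _)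
  map_mul' _ _ := Subtype.ext (funext fun _ => mul_pow _ _ _)
  map_zero' := Subtype.ext (funext fun ε => zero_pow (pow_ne_zero ε (Fact.out : p.Prime).ne_zero))
  map_add' _ _ := Subtype.ext (funext fun _ => add_pow_char_pow _ _ p _)

lemma frobeniusSeq_algebraPow (p : ℕ) [Fact p.Prime] [CharP L p] (z : ℕ → B) (i e : ℕ) :
    frobeniusSeq B L p (algebraPow (integralClosure B L) z i e) =
      seqPow L z i (fun ε => e * p ^ ε) :=
  Subtype.ext (by simp [frobeniusSeq, seqPow, algebraPow, pow_mul])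

variable {z : ℕ → B} {k n : ℕ}

lemma coe_prod_seqPow (J : Finset ℕ) (e : ℕ → ℕ → ℕ) (ι : ℕ) :
    (∏ i ∈ J, seqPow L z i (e i)).1 ι = ∏ i ∈ J, algebraPow L z i (e i ι) := by
  rw [SubmonoidClass.coe_finsetProd, Finset.prod_apply]
  rfl

lemma exists_div_pow_eq_add_sum_of_colon (p : ℕ) [Fact p.Prime] [CharP L p] (hnk : n < k)
    (hz : IsPowerRegular (algebraPow B z) k)
    (hz0 : ∀ i < k, algebraMap B L (z i) ≠ 0)
    (hsplit : ∀ i < k, ∀ R : Subalgebra B L, Module.Finite B R →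
      z i ∈ (freeFactorIdeal R).radical)
    (hseq : IsPowerRegular (seqPow L z) n) {a : ℕ → ℕ} {b : ℕ} {u : integralClosure B L}
    (hu : algebraPow (integralClosure B L) z n b * u ∈
      powerIdeal (algebraPow (integralClosure B L) z) (Finset.range n) a) :
    ∃ (N : ℕ) (v : finiteSeqSubalgebra B L) (c : ℕ → finiteSeqSubalgebra B L), ∀ ε,
      ((u : L) / ∏ i ∈ Finset.range n, algebraPow L z i (a i)) ^ p ^ ε =
        v.1 ε / (∏ i ∈ Finset.range n, algebraPow L z i N) + ∑ j ∈ Finset.range n,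
          (c j).1 ε * algebraPow L z j (a j * p ^ ε + N) /
            ∏ i ∈ Finset.range n, algebraPow L z i (a i * p ^ ε + N) := by
  have hfrob := map_mem_powerIdeal (pw' := seqPow L z) (e' := fun i ε => a i * p ^ ε)
    (frobeniusSeq B L p) (fun i => frobeniusSeq_algebraPow p z i (a i)) hu
  rw [map_mul, frobeniusSeq_algebraPow] at hfrob
  obtain ⟨N, v, hv⟩ := exists_prod_mul_sub_mem_of_colon hnk hz hsplit hseq hfrob
  obtain ⟨c, hc⟩ := mem_powerIdeal_seqPow.1 hv
  refine ⟨N, v, c, fun ε => ?_⟩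
  have hne : ∀ e : ℕ → ℕ, ∏ i ∈ Finset.range n, algebraPow L z i (e i) ≠ 0 := fun e =>
    Finset.prod_ne_zero_iff.2 fun i hi =>
      pow_ne_zero _ (hz0 i ((Finset.mem_range.1 hi).trans hnk))
  have hpow : (∏ i ∈ Finset.range n, algebraPow L z i (a i)) ^ p ^ ε =
      ∏ i ∈ Finset.range n, algebraPow L z i (a i * p ^ ε) := by
    simp only [algebraPow, pow_mul, Finset.prod_pow]
  have hsum : (∏ i ∈ Finset.range n, algebraPow L z i N) * (u : L) ^ p ^ ε -
      (∏ i ∈ Finset.range n, algebraPow L z i (a i * p ^ ε)) * v.1 ε =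
        ∑ j ∈ Finset.range n, (c j).1 ε * algebraPow L z j (a j * p ^ ε + N) := by
    have hcε := hc ε
    rwa [AddSubgroupClass.coe_sub, Pi.sub_apply, MulMemClass.coe_mul, MulMemClass.coe_mul,
      Pi.mul_apply, Pi.mul_apply, coe_prod_seqPow, coe_prod_seqPow] at hcε
  have hN := hne fun _ => N
  have ha := hne fun i => a i * p ^ ε
  rw [← Finset.sum_div, ← hsum, div_pow, hpow]
  simp only [algebraPow_add, Finset.prod_mul_distrib]
  field_simp
  ring

lemma isPowerRegular_one (hz0 : algebraMap B L (z 0) ≠ 0) :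
    IsPowerRegular (algebraPow (integralClosure B L) z) 1 := by
  intro j hj e b w hw
  obtain rfl : j = 0 := by omega
  have hzero : algebraPow (integralClosure B L) z 0 b * w = 0 := by
    simpa [powerIdeal] using hw
  have hzb : algebraPow (integralClosure B L) z 0 b ≠ 0 := fun h =>
    pow_ne_zero b hz0 (by simpa [algebraPow] using congrArg Subtype.val h)
  rw [(mul_eq_zero.1 hzero).resolve_left hzb]
  exact zero_mem _

lemma mem_powerIdeal_of_colon [IsNoetherianRing B] [IsAlgClosed L] (p : ℕ) [Fact p.Prime]
    [CharP L p] (hnk : n < k) (hz : IsPowerRegular (algebraPow B z) k)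
    (hz0 : ∀ i < k, algebraMap B L (z i) ≠ 0)
    (hsplit : ∀ i < k, ∀ R : Subalgebra B L, Module.Finite B R →
      z i ∈ (freeFactorIdeal R).radical)
    (hseq : IsPowerRegular (seqPow L z) n) {a : ℕ → ℕ} {b : ℕ} {u : integralClosure B L}
    (hu : algebraPow (integralClosure B L) z n b * u ∈
      powerIdeal (algebraPow (integralClosure B L) z) (Finset.range n) a) :
    u ∈ powerIdeal (algebraPow (integralClosure B L) z) (Finset.range n) a := by
  rcases Nat.eq_zero_or_pos n with rfl | hn
  · exact isPowerRegular_one (hz0 0 hnk) 0 one_pos a b u hu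
  have hz0' : ∀ i ∈ Finset.range n, algebraMap B L (z i) ≠ 0 := fun i hi =>
    hz0 i ((Finset.mem_range.1 hi).trans hnk)
  obtain ⟨N, v, c, hdecomp⟩ := exists_div_pow_eq_add_sum_of_colon p hnk hz hz0 hsplit hseq hu
  obtain ⟨s, hs⟩ := exists_forall_coe_eq_sum_algebraMap_mul v
  obtain ⟨α, hα⟩ := hs s
  let D : ℕ → B := fun j => ∏ i ∈ (Finset.range n).erase j, z i ^ (a i * p ^ s + N)
  have hD : ∀ j, algebraMap B L (D j) =
      ∏ i ∈ (Finset.range n).erase j, algebraPow L z i (a i * p ^ s + N) := fun j => by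
    simp only [D, map_prod, map_pow, algebraPow]
  obtain ⟨ζ, hζ, hsum⟩ := exists_eq_sum_isIntegral_mul p (Finset.nonempty_range_iff.2 hn.ne') D
    (a := α) (v := fun ε => v.1 ε / ∏ i ∈ Finset.range n, algebraPow L z i N)
    (by simp only [hα, Finset.sum_div, mul_div_assoc])
    (fun j hj ε hε => hD j ▸ isIntegral_prod_erase_mul_div hz0'
      (fun _ _ => isIntegral_algebraMap) (fun i _ => Nat.add_le_add_right (Nat.mul_le_mul_left _
        (Nat.pow_le_pow_right (Fact.out : p.Prime).pos hε)) N) hj (evalSeq B L ε (c j)).2)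
    hdecomp
  refine mem_powerIdeal_of_eq_prod_mul_sum hseq.of_seqPow a (fun i => a i * p ^ s + N)
    (fun j hj => hD j ▸ hζ j hj) ?_
  rw [← hsum, mul_div_cancel₀]
  exact Finset.prod_ne_zero_iff.2 fun i hi => pow_ne_zero _ (hz0' i hi)

lemma mem_powerIdeal_seqPow_of_forall_evalSeq_mem [IsNoetherianRing B] {e : ℕ → ℕ}
    {v : finiteSeqSubalgebra B L} (hv : ∀ ι, evalSeq B L ι v ∈
      powerIdeal (algebraPow (integralClosure B L) z) (Finset.range n) e) :
    v ∈ powerIdeal (seqPow L z) (Finset.range n) (fun i _ => e i) := by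
  obtain ⟨m, hm⟩ := exists_forall_coe_eq_sum_algebraMap_mul v
  choose a ha using hm
  let g : ℕ → finiteSeqSubalgebra B L := fun j =>
    ⟨fun ι => algebraMap B L (a ι j), ⊥, inferInstance, fun _ => Subalgebra.algebraMap_mem _ _⟩
  have hsum : v = ∑ j ∈ Finset.range m, g j * constSeq B L (evalSeq B L j v) := by
    apply Subtype.ext
    funext ι
    rw [AddSubmonoidClass.coe_finsetSum, Finset.sum_apply, ha ι]
    rfl
  rw [hsum]
  exact sum_mem fun j _ => Ideal.mul_mem_left _ _
    (map_mem_powerIdeal (constSeq B L) (fun i => constSeq_algebraPow z i (e i)) (hv j))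

lemma mem_powerIdeal_seqPow_of_colon [IsNoetherianRing B] [IsAlgClosed L] (p : ℕ) [Fact p.Prime]
    [CharP L p] (hnk : n < k) (hz : IsPowerRegular (algebraPow B z) k)
    (hz0 : ∀ i < k, algebraMap B L (z i) ≠ 0)
    (hsplit : ∀ i < k, ∀ R : Subalgebra B L, Module.Finite B R →
      z i ∈ (freeFactorIdeal R).radical)
    (hseq : IsPowerRegular (seqPow L z) n) {a : ℕ → ℕ → ℕ} {b : ℕ → ℕ}
    {w : finiteSeqSubalgebra B L}
    (hw : seqPow L z n b * w ∈ powerIdeal (seqPow L z) (Finset.range n) a) :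
    w ∈ powerIdeal (seqPow L z) (Finset.range n) a := by
  obtain ⟨N, v, hv⟩ := exists_prod_mul_sub_mem_of_colon hnk hz hsplit hseq hw
  have hvN : v ∈ powerIdeal (seqPow L z) (Finset.range n) (fun _ _ => N) := by
    refine mem_powerIdeal_seqPow_of_forall_evalSeq_mem fun ι => ?_
    have heval {e : ℕ → ℕ → ℕ} {x : finiteSeqSubalgebra B L}
        (hx : x ∈ powerIdeal (seqPow L z) (Finset.range n) e) : evalSeq B L ι x ∈
          powerIdeal (algebraPow (integralClosure B L) z) (Finset.range n) (fun i => e i ι) :=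
      map_mem_powerIdeal (evalSeq B L ι) (fun i => evalSeq_seqPow z i (e i) ι) hx
    have hwι : evalSeq B L ι w ∈
        powerIdeal (algebraPow (integralClosure B L) z) (Finset.range n) (fun i => a i ι) := by
      refine mem_powerIdeal_of_colon p hnk hz hz0 hsplit hseq (b := b ι) ?_
      simpa only [map_mul, evalSeq_seqPow] using heval hw
    have hvι := heval hv
    simp only [map_sub, map_mul, map_prod, evalSeq_seqPow] at hvι
    refine hseq.of_seqPow.mem_of_prod_mul_mem_raiseBelow (algebraPow_add z) le_rfl (fun _ => N)
      (fun i => a i ι) ?_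
    have hprod := prod_mul_mem_powerIdeal_raiseBelow (algebraPow_add z) n _ (fun _ => N) hwι
    rw [powerIdeal_raiseBelow] at hprod ⊢
    rw [add_comm]
    exact (Submodule.sub_mem_iff_right _ hprod).1 hvι
  apply hseq.mem_of_prod_mul_mem_raiseBelow (seqPow_add z) le_rfl _ (fun _ _ => N)
  have hprod := prod_mul_mem_powerIdeal_raiseBelow (seqPow_add z) n _ a hvN
  rw [powerIdeal_raiseBelow] at hprod ⊢
  rw [add_comm] at hprod
  exact (Submodule.sub_mem_iff_left _ hprod).1 hv

theorem isPowerRegular_seqPow [IsNoetherianRing B] [IsAlgClosed L] (p : ℕ) [Fact p.Prime]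
    [CharP L p] (hz : IsPowerRegular (algebraPow B z) k)
    (hz0 : ∀ i < k, algebraMap B L (z i) ≠ 0)
    (hsplit : ∀ i < k, ∀ R : Subalgebra B L, Module.Finite B R →
      z i ∈ (freeFactorIdeal R).radical) :
    IsPowerRegular (seqPow L z) k := by
  intro n hnk
  induction n using Nat.strong_induction_on with
  | _ n ih =>
    intro e b w hw
    exact mem_powerIdeal_seqPow_of_colon p hnk hz hz0 hsplit
      (fun j hj => ih j hj (hj.trans hnk)) hw

end EquationalArgument

/-! ### Regular sequences -/

section RegularSeq

variable {B : Type*} [CommRing B] (z : ℕ → B)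

/-- The ideal generated by the first `n` members of a sequence. -/
def prefixIdeal (n : ℕ) : Ideal B := Ideal.span (z '' (Finset.range n : Set ℕ))

lemma prefixIdeal_zero : prefixIdeal z 0 = ⊥ := by simp [prefixIdeal]

lemma prefixIdeal_succ (n : ℕ) : prefixIdeal z (n + 1) = Ideal.span {z n} ⊔ prefixIdeal z n := by
  rw [prefixIdeal, Finset.range_add_one, Finset.coe_insert, Set.image_insert_eq, Ideal.span_insert,
    prefixIdeal]

variable {z}

lemma prefixIdeal_congr {z' : ℕ → B} {n : ℕ} (h : ∀ i < n, z i = z' i) :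
    prefixIdeal z n = prefixIdeal z' n :=
  congrArg Ideal.span (Set.image_congr fun i hi => h i (Finset.mem_range.1 hi))

lemma prefixIdeal_le {n : ℕ} {I : Ideal B} (h : ∀ i < n, z i ∈ I) : prefixIdeal z n ≤ I :=
  Ideal.span_le.2 (Set.image_subset_iff.2 fun i hi => h i (Finset.mem_range.1 hi))

lemma mem_prefixIdeal_succ_smul {M : Type*} [AddCommGroup M] [Module B M] {n : ℕ}
    {P : Submodule B M} {g : M} :
    g ∈ prefixIdeal z (n + 1) • P ↔ ∃ f ∈ P, ∃ h ∈ prefixIdeal z n • P, z n • f + h = g := by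
  rw [prefixIdeal_succ, Submodule.sup_smul, Submodule.ideal_span_singleton_smul, Submodule.mem_sup]
  constructor
  · rintro ⟨_, ⟨f, hf, rfl⟩, h, hh, rfl⟩
    exact ⟨f, hf, h, hh, rfl⟩
  · rintro ⟨f, hf, h, hh, rfl⟩
    exact ⟨_, ⟨f, hf, rfl⟩, h, hh, rfl⟩

variable (M : Type*) [AddCommGroup M] [Module B M] (z)

/-- The first `k` members of `z` form a weakly regular sequence on `M`. This is
`RingTheory.Sequence.IsWeaklyRegular` for a sequence indexed by `ℕ` instead of a list, so that
prefixes and exponents can be indexed alike. -/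
def IsWeaklyRegularSeq (k : ℕ) : Prop :=
  ∀ n < k, ∀ w : M, z n • w ∈ prefixIdeal z n • (⊤ : Submodule B M) →
    w ∈ prefixIdeal z n • (⊤ : Submodule B M)

variable {z M}

lemma isWeaklyRegularSeq_self_iff {k : ℕ} :
    IsWeaklyRegularSeq z B k ↔ ∀ n < k, ∀ w, z n * w ∈ prefixIdeal z n → w ∈ prefixIdeal z n := by
  simp only [IsWeaklyRegularSeq, smul_eq_mul, Ideal.mul_top]

lemma powerIdeal_algebraPow_one {S : Type*} [CommRing S] [Algebra B S] (n : ℕ) :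
    powerIdeal (algebraPow S z) (Finset.range n) (fun _ => 1) =
      (prefixIdeal z n).map (algebraMap B S) := by
  simp only [powerIdeal, algebraPow, pow_one, prefixIdeal, Ideal.map_span, Set.image_image]

lemma isWeaklyRegularSeq_algebra_iff {S : Type*} [CommRing S] [Algebra B S] {k : ℕ} :
    IsWeaklyRegularSeq z S k ↔ ∀ n < k, ∀ w,
      algebraMap B S (z n) * w ∈ powerIdeal (algebraPow S z) (Finset.range n) (fun _ => 1) →
        w ∈ powerIdeal (algebraPow S z) (Finset.range n) (fun _ => 1) := by
  simp only [IsWeaklyRegularSeq, Ideal.smul_top_eq_map, Submodule.restrictScalars_mem,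
    powerIdeal_algebraPow_one, ← Algebra.smul_def]

end RegularSeq

section RegularPowers

/-- `x` is a nonzerodivisor modulo the ideal `I`. -/
def IsRegularModulo {T : Type*} [CommRing T] (I : Ideal T) (x : T) : Prop :=
  ∀ w, x * w ∈ I → w ∈ I

lemma IsPowerRegular.isRegularModulo_update_add {T E : Type*} [CommRing T] [Add E]
    {pw : ℕ → E → T} (hadd : ∀ i a b, pw i (a + b) = pw i a * pw i b) {n i : ℕ}
    (h : IsPowerRegular pw n) (hi : i < n) {e : ℕ → E} {a b : E} {x : T}
    (ha : IsRegularModulo (powerIdeal pw (Finset.range n) (Function.update e i a)) x)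
    (hb : IsRegularModulo (powerIdeal pw (Finset.range n) (Function.update e i b)) x) :
    IsRegularModulo (powerIdeal pw (Finset.range n) (Function.update e i (a + b))) x := by
  intro w hw
  have mem_iff (c : E) (v : T) :
      v ∈ powerIdeal pw (Finset.range n) (Function.update e i c) ↔
        ∃ t, ∃ r ∈ powerIdeal pw ((Finset.range n).erase i) e, v = t * pw i c + r := by
    rw [mem_powerIdeal_range hi, powerIdeal_erase_update, Function.update_self]
  obtain ⟨q, r, hr, hxw⟩ := (mem_iff _ _).1 hw
  obtain ⟨s, v, hv, hws⟩ := (mem_iff _ _).1 <| ha w <| (mem_iff _ _).2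
    ⟨q * pw i b, r, hr, by rw [hxw, hadd]; ring⟩
  have hxs : x * s - q * pw i b ∈ powerIdeal pw ((Finset.range n).erase i) e := by
    apply h.erase hi e a
    have hsub := sub_mem hr (Ideal.mul_mem_left _ x hv)
    convert hsub using 1
    linear_combination hxw - x * hws + q * hadd i a b
  obtain ⟨t, v', hv', hst⟩ := (mem_iff _ _).1 <| hb s <| (mem_iff _ _).2
    ⟨q, _, hxs, by ring⟩
  refine (mem_iff _ _).2 ⟨t, v' * pw i a + v, add_mem (Ideal.mul_mem_right _ _ hv') hv, ?_⟩
  rw [hws, hst, hadd]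
  ring

variable {B S : Type*} [CommRing B] [CommRing S] [Algebra B S] {z : ℕ → B}

lemma powerIdeal_algebraPow_eq_top {J : Finset ℕ} {e : ℕ → ℕ} {i : ℕ} (hi : i ∈ J)
    (h0 : e i = 0) : powerIdeal (algebraPow S z) J e = ⊤ := by
  refine (Ideal.eq_top_iff_one _).2 ?_
  simpa only [algebraPow, h0, pow_zero] using mem_powerIdeal_of_mem (pw := algebraPow S z) hi e

lemma IsPowerRegular.isRegularModulo_of_one {n : ℕ} (h : IsPowerRegular (algebraPow S z) n)
    {x : S} (hx : IsRegularModulo (powerIdeal (algebraPow S z) (Finset.range n) fun _ => 1) x)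
    (e : ℕ → ℕ) : IsRegularModulo (powerIdeal (algebraPow S z) (Finset.range n) e) x := by
  have below : ∀ m ≤ n, ∀ e : ℕ → ℕ, (∀ i, m ≤ i → e i = 1) →
      IsRegularModulo (powerIdeal (algebraPow S z) (Finset.range n) e) x := by
    intro m
    induction m with
    | zero =>
      intro _ e he
      rwa [funext fun i => he i (Nat.zero_le i)]
    | succ m ih =>
      intro hm e he
      suffices hupdate : ∀ t, IsRegularModulo
          (powerIdeal (algebraPow S z) (Finset.range n) (Function.update e m t)) x by
        simpa only [Function.update_eq_self] using hupdate (e m)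
      have hone := ih (by omega) (Function.update e m 1) fun i hi => by
        rcases eq_or_ne i m with rfl | hne
        · rw [Function.update_self]
        · rw [Function.update_of_ne hne, he i (by omega)]
      intro t
      induction t with
      | zero =>
        intro w _
        rw [powerIdeal_algebraPow_eq_top (Finset.mem_range.2 hm) (Function.update_self m 0 e)]
        trivial
      | succ t iht => exact h.isRegularModulo_update_add (algebraPow_add z) hm iht hone
  rw [powerIdeal_congr (e' := fun i => if i < n then e i else 1) fun i hi =>
    (if_pos (Finset.mem_range.1 hi)).symm]
  exact below n le_rfl _ fun i hi => if_neg (by omega)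

lemma isPowerRegular_algebraPow_iff {k : ℕ} :
    IsPowerRegular (algebraPow S z) k ↔ IsWeaklyRegularSeq z S k := by
  rw [isWeaklyRegularSeq_algebra_iff]
  constructor
  · intro h n hn w hw
    exact h n hn _ 1 w (by rwa [algebraPow, pow_one])
  · intro h n
    induction n using Nat.strong_induction_on with
    | _ n ih =>
      intro hn e b w hw
      have hprev : IsPowerRegular (algebraPow S z) n := fun j hj => ih j hj (hj.trans hn)
      have hreg := hprev.isRegularModulo_of_one (h n hn) e
      induction b generalizing w with
      | zero => simpa only [algebraPow, pow_zero, one_mul] using hw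
      | succ b ihb => exact ihb _ (hreg _ (by rwa [algebraPow, pow_succ', mul_assoc] at hw))

end RegularPowers

section MaximalRegularSeq

variable {B : Type*} [CommRing B]

lemma exists_socle_of_forall_not_isRegularModulo [IsNoetherianRing B] [IsLocalRing B]
    {I : Ideal B} (hI : ∀ x ∈ maximalIdeal B, ¬ IsRegularModulo I x) :
    ∃ u ∉ I, ∀ c ∈ maximalIdeal B, c * u ∈ I := by
  have hcover : (maximalIdeal B : Set B) ⊆ ⋃ P ∈ associatedPrimes B (B ⧸ I), (P : Set B) := by
    rw [biUnion_associatedPrimes_eq_zero_divisors]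
    intro x hx
    obtain ⟨w, hxw, hw⟩ : ∃ w, x * w ∈ I ∧ w ∉ I := by simpa [IsRegularModulo] using hI x hx
    exact ⟨Ideal.Quotient.mk I w, mt Ideal.Quotient.eq_zero_iff_mem.1 hw,
      Ideal.Quotient.eq_zero_iff_mem.2 hxw⟩
  obtain ⟨P, hP, hmP⟩ := (Ideal.subset_union_prime_finite
    (associatedPrimes.finite B (B ⧸ I)) (f := id) ⊥ ⊥ fun P hP _ _ => hP.isPrime).1 hcover
  obtain ⟨hPprime, w, hw⟩ := isAssociatedPrime_iff.1 (AssociatedPrimes.mem_iff.1 hP)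
  obtain ⟨u, rfl⟩ := Ideal.Quotient.mk_surjective w
  have mem_P (c : B) : c ∈ P ↔ c * u ∈ I := by
    rw [hw, Submodule.mem_colon_singleton, Submodule.mem_bot]
    exact Ideal.Quotient.eq_zero_iff_mem
  refine ⟨u, fun hu => hPprime.ne_top ((Ideal.eq_top_iff_one P).2 ?_), fun c hc =>
    (mem_P c).1 (hmP hc)⟩
  rwa [mem_P, one_mul]

lemma prefixIdeal_update_of_le {z : ℕ → B} {n k : ℕ} (h : n ≤ k) (x : B) :
    prefixIdeal (Function.update z k x) n = prefixIdeal z n :=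
  prefixIdeal_congr fun _ hi => Function.update_of_ne (hi.trans_le h).ne _ _

lemma IsWeaklyRegularSeq.update {z : ℕ → B} {k : ℕ} (h : IsWeaklyRegularSeq z B k) {x : B}
    (hx : IsRegularModulo (prefixIdeal z k) x) :
    IsWeaklyRegularSeq (Function.update z k x) B (k + 1) := by
  rw [isWeaklyRegularSeq_self_iff] at h ⊢
  intro n hn
  rw [prefixIdeal_update_of_le (by omega)]
  rcases Nat.lt_succ_iff_lt_or_eq.1 hn with hlt | rfl
  · rw [Function.update_of_ne hlt.ne]
    exact h n hlt
  · rw [Function.update_self]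
    exact hx

lemma exists_isWeaklyRegularSeq_socle [IsNoetherianRing B] [IsLocalRing B] :
    ∃ (z : ℕ → B) (k : ℕ), (∀ i < k, z i ∈ maximalIdeal B) ∧ IsWeaklyRegularSeq z B k ∧
      ∃ u ∉ prefixIdeal z k, ∀ c ∈ maximalIdeal B, c * u ∈ prefixIdeal z k := by
  let regularIdeals : Set (Ideal B) := {I | ∃ (z : ℕ → B) (k : ℕ),
    (∀ i < k, z i ∈ maximalIdeal B) ∧ IsWeaklyRegularSeq z B k ∧ I = prefixIdeal z k}
  have hne : regularIdeals.Nonempty :=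
    ⟨_, fun _ => 0, 0, fun _ hi => by omega, fun _ hn => by omega, rfl⟩
  obtain ⟨_, ⟨z, k, hzm, hreg, rfl⟩, hmax⟩ :=
    set_has_maximal_iff_noetherian.2 (inferInstance : IsNoetherian B B) regularIdeals hne
  refine ⟨z, k, hzm, hreg, exists_socle_of_forall_not_isRegularModulo fun x hxm hx => ?_⟩
  have hxk : x ∉ prefixIdeal z k := fun hxI =>
    (Ideal.ne_top_iff_one _).1 (maximalIdeal.isMaximal B).ne_top
      (prefixIdeal_le hzm (hx 1 (by rwa [mul_one])))
  refine hmax _ ⟨Function.update z k x, k + 1, fun i hi => ?_, hreg.update hx, rfl⟩ ?_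
  · rcases Nat.lt_succ_iff_lt_or_eq.1 hi with hlt | rfl
    · rw [Function.update_of_ne hlt.ne]
      exact hzm i hlt
    · rwa [Function.update_self]
  · rw [prefixIdeal_succ, prefixIdeal_update_of_le le_rfl, Function.update_self, right_lt_sup,
      Ideal.span_singleton_le_iff_mem]
    exact hxk

end MaximalRegularSeq

/-! ### Purity and flatness -/

section Purity

variable {B : Type*} [CommRing B]

lemma exists_eq_sum_smul_of_mem_smul_top {M : Type*} [AddCommGroup M] [Module B M] {I : Ideal B}
    {x : M} (hx : x ∈ I • (⊤ : Submodule B M)) :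
    ∃ (s : Finset M) (a : s → B), (∀ y, a y ∈ I) ∧ x = ∑ y, a y • (y : M) := by
  rw [← Submodule.span_univ, ← Set.range_id, Submodule.mem_ideal_smul_span_iff_exists_sum] at hx
  obtain ⟨a, ha, rfl⟩ := hx
  exact ⟨a.support, fun y => a y, fun y => ha y, (Finset.sum_coe_sort _ fun y => a y • y).symm⟩

lemma mem_colon_smul_top_of_flat {M : Type*} [AddCommGroup M] [Module B M] [Module.Flat B M]
    {I : Ideal B} {c : B} {y : M} (h : c • y ∈ I • (⊤ : Submodule B M)) :
    y ∈ I.colon {c} • (⊤ : Submodule B M) := by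
  obtain ⟨s, a, ha, hs⟩ := exists_eq_sum_smul_of_mem_smul_top h
  let coeff : Option s → B := fun i => i.elim c fun v => -a v
  let vec : Option s → M := fun i => i.elim y fun v => v
  have hrel : ∑ i, coeff i • vec i = 0 := by
    simp [Fintype.sum_option, coeff, vec, hs]
  obtain ⟨k, b, w, hb, hcoeff⟩ := Module.Flat.isTrivialRelation_of_sum_smul_eq_zero hrel
  have hy : y = ∑ j, b none j • w j := hb none
  rw [hy]
  refine sum_mem fun j _ => Submodule.smul_mem_smul ?_ trivial
  have hj : c * b none j + ∑ v, -a v * b (some v) j = 0 := by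
    simpa only [Fintype.sum_option, coeff, Option.elim] using hcoeff j
  rw [Submodule.mem_colon_singleton, smul_eq_mul, mul_comm, eq_neg_of_add_eq_zero_left hj]
  exact neg_mem (sum_mem fun v _ => Ideal.mul_mem_right _ _ (neg_mem (ha v)))

variable {F N : Type*} [AddCommGroup F] [Module B F] [AddCommGroup N] [Module B N]
  {π : F →ₗ[B] N}

lemma rTensor_subtype_ker_injective {I : Ideal B}
    (hI : I • ⊤ ⊓ LinearMap.ker π ≤ I • LinearMap.ker π) :
    Function.Injective ((LinearMap.ker π).subtype.rTensor (B ⧸ I)) := by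
  rw [injective_iff_map_eq_zero]
  intro x hx
  obtain ⟨x, rfl⟩ := (tensorQuotEquivQuotSMul (LinearMap.ker π) I).symm.surjective x
  obtain ⟨x, rfl⟩ := Submodule.Quotient.mk_surjective _ x
  rw [tensorQuotEquivQuotSMul_symm_mk, LinearMap.rTensor_tmul,
    ← tensorQuotEquivQuotSMul_symm_mk, LinearEquiv.map_eq_zero_iff,
    Submodule.Quotient.mk_eq_zero] at hx
  rw [LinearEquiv.map_eq_zero_iff, Submodule.Quotient.mk_eq_zero, Submodule.mem_smul_top_iff]
  exact hI ⟨hx, x.2⟩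

lemma lTensor_subtype_injective_of_rTensor_ker [Module.Flat B F] (hπ : Function.Surjective π)
    {I : Ideal B} (h : Function.Injective ((LinearMap.ker π).subtype.rTensor (B ⧸ I))) :
    Function.Injective ((Submodule.subtype I).lTensor N) :=
  lTensor_injective_of_exact_of_exact_of_rTensor_injective (LinearMap.exact_subtype_ker_map π) hπ
    (g₂ := I.mkQ) (LinearMap.exact_subtype_mkQ I) (Submodule.mkQ_surjective I) h
    (Module.Flat.lTensor_preserves_injective_linearMap _ (Submodule.subtype_injective _))

lemma flat_of_forall_smul_top_inf_ker_le [Module.Flat B F] (hπ : Function.Surjective π)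
    (h : ∀ I : Ideal B, I • ⊤ ⊓ LinearMap.ker π ≤ I • LinearMap.ker π) : Module.Flat B N :=
  Module.Flat.iff_lTensor_injective'.2 fun I =>
    lTensor_subtype_injective_of_rTensor_ker hπ (rTensor_subtype_ker_injective (h I))

lemma flat_of_exact {G : Type*} [AddCommGroup G] [Module B G] {f : G →ₗ[B] F}
    (hf : Function.Injective f) (hfπ : Function.Exact f π) (hπ : Function.Surjective π)
    [Module.Flat B F] [Module.Flat B N] : Module.Flat B G := by
  refine Module.Flat.iff_rTensor_injective'.2 fun I => ?_
  have hcomm : f.lTensor B ∘ₗ I.subtype.rTensor G = I.subtype.rTensor F ∘ₗ f.lTensor I := by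
    rw [LinearMap.lTensor_comp_rTensor, LinearMap.rTensor_comp_lTensor]
  have hcomp : Function.Injective (f.lTensor B ∘ₗ I.subtype.rTensor G) := by
    rw [hcomm]
    exact (Module.Flat.iff_rTensor_injective'.1 inferInstance I).comp
      (LinearMap.lTensor_injective_of_exact_of_flat π hπ f hf hfπ I)
  exact Function.Injective.of_comp hcomp

lemma flat_localizedModule_ker (hπ : Function.Surjective π) [Module.Flat B F] (S : Submonoid B)
    [Module.Flat B (LocalizedModule S N)] :
    Module.Flat B (LocalizedModule S (LinearMap.ker π)) := by
  have : Module.Flat B (Localization S) := IsLocalization.flat _ S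
  have : Module.Flat B (LocalizedModule S F) := Module.Flat.trans B (Localization S) _
  exact flat_of_exact
    (f := (LocalizedModule.map S (LinearMap.ker π).subtype).restrictScalars B)
    (π := (LocalizedModule.map S π).restrictScalars B)
    (LocalizedModule.map_injective S _ (Submodule.subtype_injective _))
    (LocalizedModule.map_exact S _ π (LinearMap.exact_subtype_ker_map π))
    (LocalizedModule.map_surjective S π hπ)

lemma exists_smul_isTrivialRelation (S : Submonoid B) [Module.Flat B (LocalizedModule S N)]
    {ι : Type*} [Fintype ι] {a : ι → B} {n : ι → N} (h : ∑ i, a i • n i = 0) :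
    ∃ c ∈ S, Module.IsTrivialRelation a fun i => c • n i := by
  let toLoc := LocalizedModule.mkLinearMap S N
  have hloc : ∑ i, a i • toLoc (n i) = 0 := by
    simpa only [map_sum, map_smul, map_zero] using congrArg toLoc h
  obtain ⟨k, b, ν, hb, hab⟩ : Module.IsTrivialRelation a fun i => toLoc (n i) :=
    Module.Flat.isTrivialRelation_of_sum_smul_eq_zero hloc
  replace hb (i : ι) : toLoc (n i) = ∑ j, b i j • ν j := hb i
  obtain ⟨t, ht⟩ := IsLocalizedModule.exist_integer_multiples_of_finite S toLoc ν
  choose w hw using ht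
  have hclear (i : ι) : ∃ c : S, c • (t • n i) = c • ∑ j, b i j • w j := by
    refine (IsLocalizedModule.eq_iff_exists S toLoc).1 ?_
    rw [Submonoid.smul_def, map_smul, hb i, map_sum, Finset.smul_sum]
    exact Finset.sum_congr rfl fun j _ => by rw [map_smul, hw j, smul_comm]
  choose c hc using hclear
  refine ⟨(∏ i, (c i : B)) * t, mul_mem (prod_mem fun i _ => (c i).2) t.2, k,
    b, fun j => (∏ i, (c i : B)) • w j, fun i => ?_, hab⟩
  classical
  have hci : (c i : B) • (t : B) • n i = (c i : B) • ∑ j, b i j • w j := hc i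
  simp only [smul_comm (b i _), ← Finset.smul_sum]
  rw [← Finset.prod_erase_mul _ _ (Finset.mem_univ i), mul_smul, mul_smul, mul_smul, hci]

lemma sum_smul_mem_smul_ker_of_isTrivialRelation (hπ : Function.Surjective π) {ι : Type*}
    [Fintype ι] {a : ι → B} {y : ι → F} (h : Module.IsTrivialRelation a fun i => π (y i))
    {I : Ideal B} (ha : ∀ i, a i ∈ I) : ∑ i, a i • y i ∈ I • LinearMap.ker π := by
  obtain ⟨k, b, n, hb, hab⟩ := h
  choose w hw using fun j => hπ (n j)
  have hzero : ∑ i, a i • ∑ j, b i j • w j = 0 := by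
    simp only [Finset.smul_sum, smul_smul]
    rw [Finset.sum_comm]
    simp only [← Finset.sum_smul, hab, zero_smul, Finset.sum_const_zero]
  have hsum : ∑ i, a i • y i = ∑ i, a i • (y i - ∑ j, b i j • w j) := by
    simp only [smul_sub, Finset.sum_sub_distrib, hzero, sub_zero]
  rw [hsum]
  refine sum_mem fun i _ => Submodule.smul_mem_smul (ha i) ?_
  simp only [LinearMap.mem_ker, map_sub, map_sum, map_smul, hw, hb, sub_self]

lemma exists_smul_mem_smul_ker_of_flat_localizedModule (hπ : Function.Surjective π)
    (S : Submonoid B) [Module.Flat B (LocalizedModule S N)] {I : Ideal B} {g : F}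
    (hg : g ∈ I • ⊤ ⊓ LinearMap.ker π) : ∃ c ∈ S, c • g ∈ I • LinearMap.ker π := by
  obtain ⟨s, a, ha, rfl⟩ := exists_eq_sum_smul_of_mem_smul_top hg.1
  obtain ⟨c, hcS, hc⟩ := exists_smul_isTrivialRelation (N := N) S (a := a)
    (n := fun y => π y) (by simpa using hg.2)
  refine ⟨c, hcS, ?_⟩
  simp only [Finset.smul_sum, smul_comm c]
  exact sum_smul_mem_smul_ker_of_isTrivialRelation hπ (by simpa only [map_smul] using hc) ha

lemma mem_colon_smul_ker_of_flat [Module.Flat B (LinearMap.ker π)] {I : Ideal B} {c : B} {g : F}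
    (hg : π g = 0) (h : c • g ∈ I • LinearMap.ker π) : g ∈ I.colon {c} • LinearMap.ker π :=
  (Submodule.mem_smul_top_iff _ _ (⟨g, hg⟩ : LinearMap.ker π)).1
    (mem_colon_smul_top_of_flat ((Submodule.mem_smul_top_iff _ _ _).2 h))

lemma smul_top_inf_ker_le_of_flat_localizedModule (hπ : Function.Surjective π)
    [Module.Flat B (LinearMap.ker π)] (Q : Ideal B) [Q.IsPrime]
    [Module.Flat B (LocalizedModule Q.primeCompl N)] :
    Q • ⊤ ⊓ LinearMap.ker π ≤ Q • LinearMap.ker π := by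
  intro g hg
  obtain ⟨c, hcQ, hc⟩ := exists_smul_mem_smul_ker_of_flat_localizedModule hπ Q.primeCompl hg
  refine Submodule.smul_mono_left (fun b hb => ?_) (mem_colon_smul_ker_of_flat hg.2 hc)
  exact (Ideal.IsPrime.mem_or_mem ‹_› (Submodule.mem_colon_singleton.1 hb)).resolve_right hcQ

lemma smul_top_inf_ker_le_of_sup_of_colon [Module.Flat B F] {I : Ideal B} {x : B}
    (hsup : (I ⊔ Ideal.span {x}) • ⊤ ⊓ LinearMap.ker π ≤
      (I ⊔ Ideal.span {x}) • LinearMap.ker π)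
    (hcolon : I.colon {x} • ⊤ ⊓ LinearMap.ker π ≤ I.colon {x} • LinearMap.ker π) :
    I • ⊤ ⊓ LinearMap.ker π ≤ I • LinearMap.ker π := by
  rintro g ⟨hgI, hg⟩
  have hgsup := hsup ⟨Submodule.smul_mono_left le_sup_left hgI, hg⟩
  rw [Submodule.sup_smul, Submodule.ideal_span_singleton_smul, Submodule.mem_sup] at hgsup
  obtain ⟨g₁, hg₁, _, ⟨h, hh, rfl⟩, rfl⟩ := hgsup
  refine add_mem hg₁ ?_
  change x • h ∈ _
  have hxh : x • h ∈ I • (⊤ : Submodule B F) :=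
    (Submodule.add_mem_iff_right _ (Submodule.smul_mono le_rfl le_top hg₁)).1 hgI
  refine Submodule.smul_induction_on (hcolon ⟨mem_colon_smul_top_of_flat hxh, hh⟩)
    (fun b hb v hv => ?_) fun v w hv hw => by rw [smul_add]; exact add_mem hv hw
  rw [smul_smul, mul_comm]
  exact Submodule.smul_mem_smul (Submodule.mem_colon_singleton.1 hb) hv

lemma smul_top_inf_ker_le_of_forall_prime [IsNoetherianRing B] [Module.Flat B F]
    (hprime : ∀ Q : Ideal B, Q.IsPrime → Q • ⊤ ⊓ LinearMap.ker π ≤ Q • LinearMap.ker π)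
    (I : Ideal B) : I • ⊤ ⊓ LinearMap.ker π ≤ I • LinearMap.ker π := by
  induction I using WellFoundedGT.induction with
  | ind I ih =>
    by_cases hI : I.IsPrime
    · exact hprime I hI
    by_cases htop : I = ⊤
    · rw [htop, Submodule.top_smul, Submodule.top_smul]
      exact inf_le_right
    obtain ⟨x, y, hxy, hx, hy⟩ : ∃ x y, x * y ∈ I ∧ x ∉ I ∧ y ∉ I := by
      simpa [Ideal.isPrime_iff, htop] using hI
    apply smul_top_inf_ker_le_of_sup_of_colon (x := x)
    · exact ih _ (left_lt_sup.2 (by rwa [Ideal.span_singleton_le_iff_mem]))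
    · refine ih _ (lt_of_le_of_ne (fun b hb => ?_) fun heq => hy ?_)
      · exact Submodule.mem_colon_singleton.2 (Ideal.mul_mem_right _ _ hb)
      · rw [heq, Submodule.mem_colon_singleton, smul_eq_mul, mul_comm]
        exact hxy

end Purity

section FlatDim

variable {B : Type u} [CommRing B]

variable (B) in
/-- `M` has flat dimension at most `D`: after `D` steps of taking kernels of surjections from
suitable flat modules, starting at `M`, a flat module is reached. -/
def FlatDimLE : ℕ → ∀ (M : Type u) [AddCommGroup M] [Module B M], Prop
  | 0, M, _, _ => Module.Flat B M
  | D + 1, M, _, _ => ∃ (F : Type u) (_ : AddCommGroup F) (_ : Module B F) (π : F →ₗ[B] M),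
      Module.Flat B F ∧ Function.Surjective π ∧ FlatDimLE D (LinearMap.ker π)

lemma FlatDimLE.of_linearEquiv {D : ℕ} {M N : Type u} [AddCommGroup M] [AddCommGroup N]
    [Module B M] [Module B N] (h : FlatDimLE B D M) (e : M ≃ₗ[B] N) : FlatDimLE B D N := by
  cases D with
  | zero =>
    have : Module.Flat B M := h
    exact Module.Flat.of_linearEquiv e.symm
  | succ D =>
    obtain ⟨F, _, _, π, hF, hπ, hker⟩ := h
    refine ⟨F, _, _, e.toLinearMap ∘ₗ π, hF, e.surjective.comp hπ, ?_⟩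
    rwa [LinearEquiv.ker_comp]

lemma FlatDimLE.succ_of_exact {D : ℕ} {G F M : Type u} [AddCommGroup G] [AddCommGroup F]
    [AddCommGroup M] [Module B G] [Module B F] [Module B M] [Module.Flat B F]
    (hG : FlatDimLE B D G) {f : G →ₗ[B] F} {g : F →ₗ[B] M} (hf : Function.Injective f)
    (hfg : Function.Exact f g) (hg : Function.Surjective g) : FlatDimLE B (D + 1) M :=
  ⟨F, _, _, g, inferInstance, hg, hG.of_linearEquiv
    ((LinearEquiv.ofInjective f hf).trans (LinearEquiv.ofEq _ _ hfg.linearMap_ker_eq.symm))⟩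

lemma FlatDimLE.localizedModule (S : Submonoid B) {D : ℕ} {M : Type u} [AddCommGroup M]
    [Module B M] (h : FlatDimLE B D M) :
    FlatDimLE (Localization S) D (LocalizedModule S M) := by
  induction D generalizing M with
  | zero =>
    have : Module.Flat B M := h
    exact (inferInstance : Module.Flat (Localization S) (LocalizedModule S M))
  | succ D ih =>
    obtain ⟨F, _, _, π, hF, hπ, hker⟩ := h
    exact (ih hker).succ_of_exact (g := LocalizedModule.map S π)
      (LocalizedModule.map_injective S _ (Submodule.subtype_injective _))
      (LocalizedModule.map_exact S _ π (LinearMap.exact_subtype_ker_map π))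
      (LocalizedModule.map_surjective S π hπ)

end FlatDim

section RegularSeqModule

variable {B : Type*} [CommRing B] {z : ℕ → B} {k : ℕ}

lemma isWeaklyRegularSeq_of_flat {F : Type*} [AddCommGroup F] [Module B F] [Module.Flat B F]
    (hz : IsWeaklyRegularSeq z B k) : IsWeaklyRegularSeq z F k := by
  rw [isWeaklyRegularSeq_self_iff] at hz
  intro n hn w hw
  refine Submodule.smul_mono_left (fun b hb => hz n hn b ?_) (mem_colon_smul_top_of_flat hw)
  rw [mul_comm]
  exact Submodule.mem_colon_singleton.1 hb

variable {F N : Type*} [AddCommGroup F] [Module B F] [AddCommGroup N] [Module B N]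
  {π : F →ₗ[B] N}

lemma IsWeaklyRegularSeq.smul_top_inf_ker_le (hN : IsWeaklyRegularSeq z N k)
    (hπ : Function.Surjective π) {n : ℕ} (hn : n ≤ k) :
    prefixIdeal z n • ⊤ ⊓ LinearMap.ker π ≤ prefixIdeal z n • LinearMap.ker π := by
  have hmap (m : ℕ) : (prefixIdeal z m • (⊤ : Submodule B F)).map π = prefixIdeal z m • ⊤ := by
    rw [Submodule.map_smul'', Submodule.map_top, LinearMap.range_eq_top.2 hπ]
  induction n with
  | zero => simp only [prefixIdeal_zero, Submodule.bot_smul, bot_inf_eq, le_refl]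
  | succ n ih =>
    rintro g ⟨hgz, hg⟩
    obtain ⟨f, -, h, hh, rfl⟩ := mem_prefixIdeal_succ_smul.1 hgz
    have hzf : z n • π f = -π h := eq_neg_of_add_eq_zero_left (by simpa using hg)
    have hπf : π f ∈ prefixIdeal z n • (⊤ : Submodule B N) := by
      refine hN n hn _ ?_
      rw [hzf, ← hmap]
      exact neg_mem (Submodule.mem_map_of_mem hh)
    rw [← hmap] at hπf
    obtain ⟨f', hf', hff'⟩ := hπf
    refine mem_prefixIdeal_succ_smul.2 ⟨f - f', by simp [hff'], z n • f' + h, ?_, ?_⟩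
    · refine ih (by omega) ⟨add_mem (Submodule.smul_mem _ _ hf') hh, ?_⟩
      rw [SetLike.mem_coe, LinearMap.mem_ker, map_add, map_smul, hff', hzf, neg_add_cancel]
    · rw [smul_sub]
      abel

lemma IsWeaklyRegularSeq.ker [Module.Flat B F] {j : ℕ} (hN : IsWeaklyRegularSeq z N j)
    (hz : IsWeaklyRegularSeq z B k) (hkj : k ≤ j + 1) (hπ : Function.Surjective π) :
    IsWeaklyRegularSeq z (LinearMap.ker π) k := by
  intro n hn w hw
  rw [Submodule.mem_smul_top_iff] at hw ⊢
  refine hN.smul_top_inf_ker_le hπ (by omega) ⟨?_, w.2⟩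
  exact isWeaklyRegularSeq_of_flat hz n hn _ (Submodule.smul_mono le_rfl le_top hw)

lemma maximalIdeal_smul_top_inf_ker_le [IsLocalRing B] [Module.Flat B (LinearMap.ker π)]
    {u : B} (hu : u ∉ prefixIdeal z k) (hmu : ∀ c ∈ maximalIdeal B, c * u ∈ prefixIdeal z k)
    (hN : IsWeaklyRegularSeq z N k) (hπ : Function.Surjective π) :
    maximalIdeal B • ⊤ ⊓ LinearMap.ker π ≤ maximalIdeal B • LinearMap.ker π := by
  rintro g ⟨hgm, hg⟩
  have hug : u • g ∈ prefixIdeal z k • (⊤ : Submodule B F) := by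
    refine Submodule.smul_induction_on hgm (fun c hc f _ => ?_) fun f f' hf hf' => ?_
    · rw [smul_smul, mul_comm]
      exact Submodule.smul_mem_smul (hmu c hc) trivial
    · rw [smul_add]
      exact add_mem hf hf'
  have hcolon := mem_colon_smul_ker_of_flat hg
    (hN.smul_top_inf_ker_le hπ le_rfl ⟨hug, Submodule.smul_mem _ u hg⟩)
  refine Submodule.smul_mono_left (le_maximalIdeal fun htop => hu ?_) hcolon
  simpa using Submodule.mem_colon_singleton.1 ((Ideal.eq_top_iff_one _).1 htop)

end RegularSeqModule

theorem flat_of_flatDimLE {B : Type u} [CommRing B] [IsNoetherianRing B] [IsLocalRing B]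
    {z : ℕ → B} {k : ℕ} {u : B} (hz : IsWeaklyRegularSeq z B k) (hu : u ∉ prefixIdeal z k)
    (hmu : ∀ c ∈ maximalIdeal B, c * u ∈ prefixIdeal z k) {D : ℕ} {N : Type u} [AddCommGroup N]
    [Module B N] (hD : FlatDimLE B D N)
    (hloc : ∀ (Q : Ideal B) [Q.IsPrime], Q ≠ maximalIdeal B →
      Module.Flat B (LocalizedModule Q.primeCompl N))
    (hN : IsWeaklyRegularSeq z N k) : Module.Flat B N := by
  induction D generalizing N with
  | zero => exact hD
  | succ D ih =>
    obtain ⟨F, _, _, π, hF, hπ, hker⟩ := hD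
    have : Module.Flat B (LinearMap.ker π) := by
      refine ih hker (fun Q _ hQ => ?_) (hN.ker hz (by omega) hπ)
      have := hloc Q hQ
      exact flat_localizedModule_ker hπ _
    refine flat_of_forall_smul_top_inf_ker_le hπ
      (smul_top_inf_ker_le_of_forall_prime fun Q hQ => ?_)
    by_cases hQm : Q = maximalIdeal B
    · exact hQm ▸ maximalIdeal_smul_top_inf_ker_le hu hmu hN hπ
    · have := hloc Q hQm
      exact smul_top_inf_ker_le_of_flat_localizedModule hπ Q

/-! ### Flatness of the integral closure in an algebraically closed field -/

section Descent

lemma IsWeaklyRegularSeq.ne_zero {B : Type*} [CommRing B] {z : ℕ → B} {k : ℕ} {I : Ideal B}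
    (hz : IsWeaklyRegularSeq z B k) (hI : I ≠ ⊤) (hzI : ∀ i < k, z i ∈ I) {i : ℕ} (hi : i < k) :
    z i ≠ 0 := by
  intro h0
  have hone := isWeaklyRegularSeq_self_iff.1 hz i hi 1 (by simp [h0])
  exact hI ((Ideal.eq_top_iff_one I).2 (prefixIdeal_le (fun j hj => hzI j (hj.trans hi)) hone))

theorem flat_integralClosure_of_isLocalRing {B L : Type u} [CommRing B] [IsNoetherianRing B]
    [IsLocalRing B] [Field L] [IsAlgClosed L] [Algebra B L] [FaithfulSMul B L] (p : ℕ)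
    [Fact p.Prime] [CharP L p] {D : ℕ} (hD : FlatDimLE B D (integralClosure B L))
    (hloc : ∀ (Q : Ideal B) [Q.IsPrime], Q ≠ maximalIdeal B →
      Module.Flat B (LocalizedModule Q.primeCompl (integralClosure B L))) :
    Module.Flat B (integralClosure B L) := by
  obtain ⟨z, k, hzm, hz, u, hu, hmu⟩ := exists_isWeaklyRegularSeq_socle (B := B)
  have hz0 (i : ℕ) (hi : i < k) : algebraMap B L (z i) ≠ 0 :=
    (map_ne_zero_iff _ (FaithfulSMul.algebraMap_injective B L)).2
      (hz.ne_zero (maximalIdeal.isMaximal B).ne_top hzm hi)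
  have hpow : IsPowerRegular (seqPow L z) k :=
    isPowerRegular_seqPow p (isPowerRegular_algebraPow_iff.2 hz) hz0
      fun i hi R _ => mem_radical_freeFactorIdeal_of_flat hloc R (hzm i hi)
  exact flat_of_flatDimLE hz hu hmu hD hloc (isPowerRegular_algebraPow_iff.1 hpow.of_seqPow)

lemma flat_localizedModule_of_under {A M N : Type*} [CommRing A] [AddCommGroup M]
    [AddCommGroup N] [Module A M] (S : Submonoid A) [Module A N] [Module (Localization S) N]
    [IsScalarTower A (Localization S) N] (f : M →ₗ[A] N) [IsLocalizedModule S f]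
    (Q : Ideal (Localization S)) [Q.IsPrime]
    [Module.Flat A (LocalizedModule (Q.under A).primeCompl M)] :
    Module.Flat A (LocalizedModule Q.primeCompl N) := by
  let g := LocalizedModule.mkLinearMap Q.primeCompl N
  have hbase : IsBaseChange (Localization.AtPrime Q) (g.restrictScalars A ∘ₗ f) :=
    (IsLocalizedModule.isBaseChange S (Localization S) f).comp
      (IsLocalizedModule.isBaseChange Q.primeCompl (Localization.AtPrime Q) g)
  have : IsLocalization (Q.under A).primeCompl (Localization.AtPrime Q) :=
    IsLocalization.isLocalization_atPrime_localization_atPrime S Q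
  have : IsLocalizedModule (Q.under A).primeCompl (g.restrictScalars A ∘ₗ f) :=
    (isLocalizedModule_iff_isBaseChange _ (Localization.AtPrime Q) _).2 hbase
  exact Module.Flat.of_linearEquiv
    (IsLocalizedModule.iso (Q.under A).primeCompl (g.restrictScalars A ∘ₗ f)).symm

variable {A B L : Type*} [CommRing A] [CommRing B] [CommRing L] [Algebra A B] [Algebra A L]
  [Algebra B L] [IsScalarTower A B L]

variable (A B L) in
/-- The inclusion of the integral closure of `A` in `L` into that of an `A`-algebra `B`. -/
def integralClosureMap : integralClosure A L →ₗ[A] integralClosure B L where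
  toFun x := ⟨x, IsIntegral.tower_top x.2⟩
  map_add' _ _ := rfl
  map_smul' _ _ := rfl

lemma isLocalizedModule_integralClosureMap (S : Submonoid A) [IsLocalization S B] :
    IsLocalizedModule S (integralClosureMap A B L) where
  map_units s := by
    have hs : algebraMap A (Module.End A (integralClosure B L)) s =
        Module.toModuleEnd A (integralClosure B L) (algebraMap A B s) :=
      LinearMap.ext fun x => (algebraMap_smul B (s : A) x).symm
    exact hs ▸ (IsLocalization.map_units B s).map _
  surj y := by
    obtain ⟨s, hs⟩ := IsIntegral.exists_multiple_integral_of_isLocalization S (y : L) y.2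
    exact ⟨⟨⟨_, hs⟩, s⟩, rfl⟩
  exists_of_eq {x y} h := by
    have hxy : (x : L) = y := congrArg (fun t : integralClosure B L => (t : L)) h
    exact ⟨1, by rw [Subtype.ext hxy]⟩

lemma height_under_lt_height {A : Type*} [CommRing A] [IsNoetherianRing A] {P : Ideal A}
    [P.IsPrime] {Q : Ideal (Localization.AtPrime P)} [Q.IsPrime]
    (hQ : Q ≠ maximalIdeal (Localization.AtPrime P)) : (Q.under A).height < P.height := by
  have hlt : Q < maximalIdeal _ := lt_of_le_of_ne (le_maximalIdeal ‹Q.IsPrime›.ne_top) hQ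
  calc (Q.under A).height = Q.height := IsLocalization.height_under P.primeCompl Q
    _ < (maximalIdeal (Localization.AtPrime P)).height :=
      Ideal.height_strict_mono_of_isPrime_of_isPrime hlt
    _ = ((maximalIdeal (Localization.AtPrime P)).under A).height :=
      (IsLocalization.height_under P.primeCompl _).symm
    _ = P.height := by rw [IsLocalization.AtPrime.under_maximalIdeal _ P]

theorem flat_localizedModule_integralClosure {A L : Type u} [CommRing A] [IsNoetherianRing A]
    [Field L] [IsAlgClosed L] [Algebra A L] [FaithfulSMul A L] (p : ℕ) [Fact p.Prime] [CharP L p]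
    {D : ℕ} (hD : FlatDimLE A D (integralClosure A L)) (P : Ideal A) [P.IsPrime]
    (hlt : ∀ (P' : Ideal A) [P'.IsPrime], P'.height < P.height →
      Module.Flat A (LocalizedModule P'.primeCompl (integralClosure A L))) :
    Module.Flat A (LocalizedModule P.primeCompl (integralClosure A L)) := by
  have hinj := FaithfulSMul.algebraMap_injective A L
  have hunit (s : P.primeCompl) : IsUnit (algebraMap A L s) :=
    ((map_ne_zero_iff _ hinj).2 fun h0 : (s : A) = 0 => s.2 (h0 ▸ P.zero_mem)).isUnit
  let := (IsLocalization.lift (S := Localization.AtPrime P) hunit).toAlgebra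
  have : IsScalarTower A (Localization.AtPrime P) L :=
    IsScalarTower.of_algebraMap_eq fun a => (IsLocalization.lift_eq hunit a).symm
  have : FaithfulSMul (Localization.AtPrime P) L :=
    (faithfulSMul_iff_algebraMap_injective _ _).2 <| (IsLocalization.lift_injective_iff hunit).2
      fun a b => ⟨fun h => by
        simp only [IsScalarTower.algebraMap_apply A (Localization.AtPrime P) L, h],
        fun h => congrArg _ (hinj h)⟩
  have hmap := isLocalizedModule_integralClosureMap (B := Localization.AtPrime P) (L := L)
    P.primeCompl
  let e := IsLocalizedModule.iso P.primeCompl (integralClosureMap A (Localization.AtPrime P) L)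
  have hflat : Module.Flat (Localization.AtPrime P)
      (integralClosure (Localization.AtPrime P) L) := by
    refine flat_integralClosure_of_isLocalRing p ((hD.localizedModule _).of_linearEquiv
      (e.extendScalarsOfIsLocalization P.primeCompl (Localization.AtPrime P))) fun Q _ hQ => ?_
    rw [Module.flat_iff_of_isLocalization (R := A) (Localization.AtPrime P) P.primeCompl]
    have := hlt (Q.under A) (height_under_lt_height hQ)
    exact flat_localizedModule_of_under P.primeCompl
      (integralClosureMap A (Localization.AtPrime P) L) Q
  rw [Module.flat_iff_of_isLocalization (R := A) (Localization.AtPrime P) P.primeCompl] at hflat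
  exact Module.Flat.of_linearEquiv e

theorem flat_integralClosure {A L : Type u} [CommRing A] [IsNoetherianRing A] [Field L]
    [IsAlgClosed L] [Algebra A L] [FaithfulSMul A L] (p : ℕ) [Fact p.Prime] [CharP L p] {D : ℕ}
    (hD : FlatDimLE A D (integralClosure A L)) : Module.Flat A (integralClosure A L) := by
  have hprime (h : ℕ∞) : ∀ (P : Ideal A) [P.IsPrime], P.height = h →
      Module.Flat A (LocalizedModule P.primeCompl (integralClosure A L)) := by
    induction h using WellFoundedLT.induction with
    | ind h ih =>
      rintro P _ rfl
      exact flat_localizedModule_integralClosure p hD P fun P' _ hP' => ih _ hP' P' rfl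
  exact Module.flat_of_localized_maximal _ fun P _ => hprime _ P rfl

end Descent

section TorVanishing

variable (A : Type u) [CommRing A]

/-- `Tor₁ᴬ(M, N) = 0`, expressed through presentations of `N` by flat modules. -/
def TorOneVanishes (M N : Type u) [AddCommGroup M] [AddCommGroup N] [Module A M] [Module A N] :
    Prop :=
  ∀ (F : Type u) [AddCommGroup F] [Module A F] (π : F →ₗ[A] N), Module.Flat A F →
    Function.Surjective π → Function.Injective ((LinearMap.ker π).subtype.lTensor M)

variable {A} {N : Type u} [AddCommGroup N] [Module A N]

lemma torOneVanishes_of_flat {M : Type u} [AddCommGroup M] [Module A M] [Module.Flat A M] :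
    TorOneVanishes A M N := fun _ _ _ _ _ _ =>
  Module.Flat.lTensor_preserves_injective_linearMap _ (Submodule.subtype_injective _)

-- Dimension shifting: `Tor₁(M, ker π) = Tor₂(M, N) = Tor₁(ker ρ, N)`.
lemma torOneVanishes_ker {F P M : Type u} [AddCommGroup F] [Module A F] [AddCommGroup P]
    [Module A P] [AddCommGroup M] [Module A M] [Module.Flat A F] [Module.Flat A P]
    {π : F →ₗ[A] N} (hπ : Function.Surjective π) {ρ : P →ₗ[A] M} (hρ : Function.Surjective ρ)
    (h : TorOneVanishes A (LinearMap.ker ρ) N) : TorOneVanishes A M (LinearMap.ker π) := by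
  intro F' _ _ π' _ hπ'
  have hcomm : (LinearMap.ker π).subtype.lTensor P ∘ₗ (LinearMap.ker ρ).subtype.rTensor _ =
      (LinearMap.ker ρ).subtype.rTensor F ∘ₗ (LinearMap.ker π).subtype.lTensor _ := by
    rw [LinearMap.lTensor_comp_rTensor, LinearMap.rTensor_comp_lTensor]
  have hcomp : Function.Injective
      ((LinearMap.ker π).subtype.lTensor P ∘ₗ (LinearMap.ker ρ).subtype.rTensor _) := by
    rw [hcomm]
    exact (Module.Flat.rTensor_preserves_injective_linearMap _ (Submodule.subtype_injective _)).comp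
      (h F π inferInstance hπ)
  exact lTensor_injective_of_exact_of_exact_of_rTensor_injective
    (LinearMap.exact_subtype_ker_map ρ) hρ (LinearMap.exact_subtype_ker_map π') hπ'
    (Function.Injective.of_comp hcomp)
    (Module.Flat.lTensor_preserves_injective_linearMap _ (Submodule.subtype_injective _))

lemma flat_of_forall_torOneVanishes (h : ∀ I : Ideal A, TorOneVanishes A (A ⧸ I) N) :
    Module.Flat A N := by
  have hsurj := Finsupp.linearCombination_id_surjective A N
  refine Module.Flat.iff_lTensor_injective'.2 fun I =>
    lTensor_subtype_injective_of_rTensor_ker hsurj ?_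
  rw [← LinearMap.lTensor_inj_iff_rTensor_inj]
  exact h I _ _ inferInstance hsurj

lemma flatDimLE_of_forall_finite {D : ℕ}
    (hA : ∀ (M : Type u) [AddCommGroup M] [Module A M], Module.Finite A M → FlatDimLE A D M)
    (N : Type u) [AddCommGroup N] [Module A N] : FlatDimLE A D N := by
  have shift (i : ℕ) : ∀ (j : ℕ) (N : Type u) [AddCommGroup N] [Module A N], i + j = D →
      (∀ (M : Type u) [AddCommGroup M] [Module A M], FlatDimLE A j M → TorOneVanishes A M N) →
      FlatDimLE A i N := by
    induction i with
    | zero =>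
      intro j N _ _ hj h
      obtain rfl : j = D := by omega
      exact flat_of_forall_torOneVanishes fun I => h _ (hA _ inferInstance)
    | succ i ih =>
      intro j N _ _ hj h
      have hsurj := Finsupp.linearCombination_id_surjective A N
      refine ⟨N →₀ A, _, _, _, inferInstance, hsurj, ih (j + 1) _ (by omega) ?_⟩
      rintro M _ _ ⟨P, _, _, ρ, _, hρ, hker⟩
      exact torOneVanishes_ker hsurj hρ (h _ hker)
  refine shift D 0 N (by omega) fun M _ _ hM => ?_
  have : Module.Flat A M := hM
  exact torOneVanishes_of_flat

end TorVanishing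

section RegularLocalRing

variable {A : Type u} [CommRing A] [IsNoetherianRing A] [IsLocalRing A] {z : ℕ → A} {k : ℕ}

lemma flat_of_isWeaklyRegularSeq (hm : prefixIdeal z k = maximalIdeal A) {M : Type u}
    [AddCommGroup M] [Module A M] [Module.Finite A M] (hM : IsWeaklyRegularSeq z M k) :
    Module.Flat A M := by
  have hsurj := Finsupp.linearCombination_id_surjective A M
  have hpure := hM.smul_top_inf_ker_le hsurj le_rfl
  rw [hm] at hpure
  have hinj := lTensor_subtype_injective_of_rTensor_ker hsurj (rTensor_subtype_ker_injective hpure)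
  have : Module.FinitePresentation A M := Module.finitePresentation_of_finite A M
  have := Module.free_of_maximalIdeal_rTensor_injective (R := A) (M := M)
    (by rwa [← LinearMap.lTensor_inj_iff_rTensor_inj])
  infer_instance

lemma flatDimLE_of_finite (hm : prefixIdeal z k = maximalIdeal A)
    (hz : IsWeaklyRegularSeq z A k) {i j : ℕ} (hij : i + j = k) {M : Type u} [AddCommGroup M]
    [Module A M] [Module.Finite A M] (hM : IsWeaklyRegularSeq z M j) : FlatDimLE A i M := by
  induction i generalizing j M with
  | zero =>
    obtain rfl : j = k := by omega
    exact flat_of_isWeaklyRegularSeq hm hM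
  | succ i ih =>
    obtain ⟨n, π, hπ⟩ := Module.Finite.exists_fin' A M
    have hker : IsWeaklyRegularSeq z (LinearMap.ker π) (j + 1) :=
      hM.ker (fun n hn => hz n (by omega)) le_rfl hπ
    exact ⟨Fin n → A, _, _, π, inferInstance, hπ, ih (by omega) hker⟩

theorem isWeaklyRegularSeq_integralClosure (hm : prefixIdeal z k = maximalIdeal A)
    (hz : IsWeaklyRegularSeq z A k) (p : ℕ) [Fact p.Prime] {L : Type u} [Field L] [IsAlgClosed L]
    [CharP L p] [Algebra A L] [FaithfulSMul A L] :
    IsWeaklyRegularSeq z (integralClosure A L) k := by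
  have hdim : FlatDimLE A k (integralClosure A L) := flatDimLE_of_forall_finite
    (fun M _ _ _ => flatDimLE_of_finite hm hz (add_zero k) fun _ hn => by omega) _
  have := flat_integralClosure p hdim
  exact isWeaklyRegularSeq_of_flat hz

end RegularLocalRing

/-! ### Cohen structure in equal characteristic -/

section FormallySmoothFields

open MvPolynomial

lemma cotangentComplex_self_mk_eq_zero_iff {R S : Type*} [CommRing R] [CommRing S] [Algebra R S]
    (f : (Algebra.Generators.self R S).toExtension.ker) :
    (Algebra.Generators.self R S).toExtension.cotangentComplex (.mk f) = 0 ↔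
      ∀ i, aeval (id : S → S) (pderiv i (f.1 : MvPolynomial S R)) = 0 := by
  rw [Algebra.Extension.cotangentComplex_mk,
    ← (Algebra.Generators.self R S).cotangentSpaceBasis.repr.map_eq_zero_iff, DFunLike.ext_iff]
  exact forall_congr' fun i => by
    rw [(Algebra.Generators.self R S).cotangentSpaceBasis_repr_one_tmul f.1 i]
    rfl

lemma subsingleton_h1Cotangent_iff (R S : Type*) [CommRing R] [CommRing S] [Algebra R S] :
    Subsingleton (Algebra.H1Cotangent R S) ↔ ∀ f : MvPolynomial S R,
      aeval (id : S → S) f = 0 → (∀ i, aeval (id : S → S) (pderiv i f) = 0) →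
        f ∈ (RingHom.ker (aeval (id : S → S) : MvPolynomial S R →ₐ[R] S)) ^ 2 := by
  change Subsingleton (Algebra.Generators.self R S).toExtension.H1Cotangent ↔ _
  rw [Algebra.Extension.subsingleton_h1Cotangent, injective_iff_map_eq_zero]
  constructor
  · intro hinj f hf hpderiv
    let f' : (Algebra.Generators.self R S).toExtension.ker := ⟨f, hf⟩
    exact (Algebra.Extension.Cotangent.mk_eq_zero_iff f').1
      (hinj _ ((cotangentComplex_self_mk_eq_zero_iff f').2 hpderiv))
  · intro hsq a ha
    obtain ⟨f, rfl⟩ := Algebra.Extension.Cotangent.mk_surjective a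
    exact (Algebra.Extension.Cotangent.mk_eq_zero_iff f).2
      (hsq f.1 f.2 ((cotangentComplex_self_mk_eq_zero_iff f).1 ha))

lemma aeval_id_rename_algebraMap {R S T : Type*} [CommRing R] [CommRing S] [CommRing T]
    [Algebra R S] [Algebra R T] [Algebra S T] [IsScalarTower R S T] (f : MvPolynomial S R) :
    aeval (id : T → T) (rename (algebraMap S T) f) = algebraMap S T (aeval (id : S → S) f) := by
  rw [aeval_rename, ← aeval_algebraMap_apply]
  rfl

lemma map_rename_ker_aeval_id_le (R S T : Type*) [CommRing R] [CommRing S] [CommRing T]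
    [Algebra R S] [Algebra R T] [Algebra S T] [IsScalarTower R S T] :
    (RingHom.ker (aeval (id : S → S) : MvPolynomial S R →ₐ[R] S)).map
        (rename (algebraMap S T) : MvPolynomial S R →ₐ[R] MvPolynomial T R) ≤
      RingHom.ker (aeval (id : T → T) : MvPolynomial T R →ₐ[R] T) := by
  rw [Ideal.map_le_iff_le_comap]
  intro f hf
  change aeval (id : T → T) (rename (algebraMap S T) f) = 0
  rw [aeval_id_rename_algebraMap, show aeval (id : S → S) f = 0 from hf, map_zero]

-- The criterion for the vanishing of `H₁` concerns one polynomial at a time, hence only finitely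
-- many elements of `K`, and finitely generated extensions of `k` are formally smooth.
lemma formallySmooth_of_perfectField (k K : Type*) [Field k] [PerfectField k] [Field K]
    [Algebra k K] : Algebra.FormallySmooth k K := by
  refine ⟨inferInstance, (subsingleton_h1Cotangent_iff k K).2 fun f hf hpderiv => ?_⟩
  obtain ⟨s, q, rfl⟩ := exists_finset_rename f
  let E := IntermediateField.adjoin k (s : Set K)
  have : Algebra.EssFiniteType k E := IntermediateField.essFiniteType_iff.2 ⟨s, rfl⟩
  have hE : Algebra.FormallySmooth k E := inferInstance
  let j : s → E := fun x => ⟨x.1, IntermediateField.subset_adjoin _ _ x.2⟩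
  have hj : rename (algebraMap E K) (rename j q) = rename (↑) q := rename_rename _ _ _
  have hEK : Function.Injective (algebraMap E K) := (algebraMap E K).injective
  have hq : rename j q ∈ RingHom.ker (aeval (id : E → E) : MvPolynomial E k →ₐ[k] E) ^ 2 := by
    refine (subsingleton_h1Cotangent_iff k E).1 hE.subsingleton_h1Cotangent _ ?_ fun i => ?_
    · rw [← hEK.eq_iff, ← aeval_id_rename_algebraMap, hj, hf, map_zero]
    · rw [← hEK.eq_iff, ← aeval_id_rename_algebraMap, map_zero, ← hpderiv (algebraMap E K i), ← hj,
        pderiv_rename hEK]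
  rw [← hj]
  refine Ideal.pow_right_mono (map_rename_ker_aeval_id_le k E K) 2 ?_
  rw [← Ideal.map_pow]
  exact Ideal.mem_map_of_mem _ hq

end FormallySmoothFields

section CompleteLocalRing

variable {R : Type*} [CommRing R] [IsLocalRing R] [IsAdicComplete (maximalIdeal R) R]

lemma exists_coefficientField (p : ℕ) [Fact p.Prime] [CharP R p] :
    ∃ g : ResidueField R →+* R, ∀ a, residue R (g a) = a := by
  let _ : Algebra (ZMod p) R := ZMod.algebra R p
  have := formallySmooth_of_perfectField (ZMod p) (ResidueField R)
  obtain ⟨g, hg⟩ := Algebra.FormallySmooth.exists_mkₐ_comp_eq_of_isAdicComplete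
    (I := maximalIdeal R) (AlgHom.id (ZMod p) (ResidueField R))
  exact ⟨g.toRingHom, fun a => DFunLike.congr_fun hg a⟩

lemma exists_mvPowerSeries_evalHom {K σ : Type*} [Field K] [Finite σ] (g : K →+* R) {w : σ → R}
    (hw : ∀ i, w i ∈ maximalIdeal R) :
    ∃ φ : MvPowerSeries σ K →+* R,
      (∀ a, φ (MvPowerSeries.C a) = g a) ∧ ∀ i, φ (MvPowerSeries.X i) = w i := by
  let _ : WithIdeal R := ⟨maximalIdeal R⟩
  let _ : UniformSpace K := ⊥
  have : DiscreteTopology K := ⟨rfl⟩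
  have hadic : IsAdic (maximalIdeal R) := rfl
  obtain ⟨_, _⟩ := hadic.isAdicComplete_iff.1 inferInstance
  have hg : Continuous g := continuous_of_discreteTopology
  have heval : MvPowerSeries.HasEval w := by
    refine ⟨fun i => ?_, by rw [Filter.cofinite_eq_bot]; exact Filter.tendsto_bot⟩
    rw [IsTopologicallyNilpotent, hadic.hasBasis_nhds_zero.tendsto_right_iff]
    intro n _
    filter_upwards [Filter.eventually_ge_atTop n] with k hk
    exact Ideal.pow_le_pow_right hk (Ideal.pow_mem_pow (hw i) k)
  refine ⟨MvPowerSeries.eval₂Hom hg heval, fun a => ?_, fun i => ?_⟩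
  · rw [MvPowerSeries.coe_eval₂Hom, MvPowerSeries.eval₂_C]
  · rw [MvPowerSeries.coe_eval₂Hom, MvPowerSeries.eval₂_X]

end CompleteLocalRing

section FiniteOverComplete

variable {A : Type*} [CommRing A]

lemma mem_smul_top_pi_iff {ι : Type*} [Finite ι] {J : Ideal A} {v : ι → A} :
    v ∈ (J • ⊤ : Submodule A (ι → A)) ↔ ∀ i, v i ∈ J := by
  classical
  constructor
  · intro hv i
    refine Submodule.smul_induction_on hv (fun r hr w _ => J.mul_mem_right _ hr)
      fun _ _ => J.add_mem
  · intro hv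
    have := Fintype.ofFinite ι
    rw [pi_eq_sum_univ' v]
    exact Submodule.sum_mem _ fun i _ => Submodule.smul_mem_smul (hv i) trivial

lemma isPrecomplete_pi (I : Ideal A) [IsPrecomplete I A] (ι : Type*) [Finite ι] :
    IsPrecomplete I (ι → A) := by
  refine ⟨fun f hf => ?_⟩
  simp only [SModEq.sub_mem, mem_smul_top_pi_iff, Pi.sub_apply] at hf ⊢
  have hlim : ∀ i, ∃ l : A, ∀ n, f n i - l ∈ I ^ n := fun i => by
    simpa only [SModEq.sub_mem, smul_eq_mul, Ideal.mul_top] using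
      IsPrecomplete.prec' (I := I) (fun n => f n i) fun {m n} hmn => by
        simpa only [SModEq.sub_mem, smul_eq_mul, Ideal.mul_top] using hf hmn i
  choose l hl using hlim
  exact ⟨l, fun n i => hl i n⟩

lemma finite_of_finite_quotient_smul_top {N : Type*} [AddCommGroup N] [Module A N] (I : Ideal A)
    [IsPrecomplete I A] [IsHausdorff I N] [Module.Finite A (N ⧸ (I • ⊤ : Submodule A N))] :
    Module.Finite A N := by
  obtain ⟨k, f, hf⟩ := Module.Finite.exists_fin' A (N ⧸ (I • ⊤ : Submodule A N))
  obtain ⟨g, rfl⟩ := Module.projective_lifting_property _ f (Submodule.mkQ_surjective _)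
  have := isPrecomplete_pi I (Fin k)
  exact Module.Finite.of_surjective g (surjective_of_mkQ_comp_surjective hf)

variable {R : Type*} [CommRing R] [Algebra A R]

lemma exists_fg_sup_pow_eq_top {J : Ideal R} (hJ : J.FG)
    (hres : ∀ r : R, ∃ a : A, r - algebraMap A R a ∈ J) (k : ℕ) :
    ∃ N : Submodule A R, N.FG ∧ (J ^ k).restrictScalars A ⊔ N = ⊤ := by
  induction k with
  | zero => exact ⟨⊥, Submodule.fg_bot, by simp [Ideal.one_eq_top]⟩
  | succ k ih =>
    obtain ⟨N, hN, htop⟩ := ih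
    obtain ⟨S, rfl⟩ := hJ
    set J := Ideal.span (S : Set R)
    have hJle : ∀ m ∈ J,
        m ∈ (J ^ (k + 1)).restrictScalars A ⊔ Submodule.span A (S : Set R) * N := by
      intro m hm
      obtain ⟨f, -, rfl⟩ := Submodule.mem_span_finset.1 hm
      refine sum_mem fun b hb => ?_
      obtain ⟨v, hv, u, hu, huv⟩ := Submodule.mem_sup.1 (htop ▸ Submodule.mem_top : f b ∈ _)
      rw [← huv, smul_eq_mul, add_mul, mul_comm u]
      refine Submodule.add_mem_sup ?_ (Submodule.mul_mem_mul (Submodule.subset_span hb) hu)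
      exact pow_succ J k ▸ Ideal.mul_mem_mul hv (Ideal.subset_span hb)
    have hone : (1 : Submodule A R).FG := by
      rw [Submodule.one_eq_span]
      exact Submodule.fg_span_singleton 1
    refine ⟨1 ⊔ Submodule.span A (S : Set R) * N,
      hone.sup ((Submodule.fg_span S.finite_toSet).mul hN), ?_⟩
    rw [eq_top_iff, sup_left_comm]
    intro r _
    obtain ⟨a, ha⟩ := hres r
    rw [← add_sub_cancel (algebraMap A R a) r]
    exact Submodule.add_mem_sup (Submodule.algebraMap_mem a) (hJle _ ha)

lemma finite_of_radical_map_eq [IsNoetherianRing R] {I : Ideal A} [IsPrecomplete I A] {J : Ideal R}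
    [IsHausdorff J R] (hJ : (I.map (algebraMap A R)).radical = J)
    (hres : ∀ r : R, ∃ a : A, r - algebraMap A R a ∈ J) : Module.Finite A R := by
  have := IsHausdorff.of_map (M := R) (I := I) (hJ ▸ Ideal.le_radical)
  obtain ⟨k, hk⟩ := Ideal.exists_radical_pow_le_of_fg (I.map (algebraMap A R))
    (IsNoetherian.noetherian _)
  rw [hJ] at hk
  obtain ⟨N, hN, htop⟩ := exists_fg_sup_pow_eq_top (IsNoetherian.noetherian J) hres k
  have hmap : N.map (I • ⊤ : Submodule A R).mkQ = ⊤ := by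
    rw [Submodule.map_mkQ_eq_top, Ideal.smul_top_eq_map, eq_top_iff, ← htop]
    exact sup_le_sup_right ((Submodule.restrictScalars_le A).2 hk) _
  have : Module.Finite A (R ⧸ (I • ⊤ : Submodule A R)) := ⟨hmap ▸ hN.map _⟩
  exact finite_of_finite_quotient_smul_top I

end FiniteOverComplete

/-! ### Noether normalization of complete local rings -/

section ZeroExtend

variable {B : Type*} [CommRing B]

/-- A finite family continued by zeros, which turns families indexed by `Fin d` into sequences to
which `prefixIdeal` applies. -/
noncomputable def zeroExtend {d : ℕ} (x : Fin d → B) : ℕ → B := Function.extend Fin.val x 0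

lemma zeroExtend_val {d : ℕ} (x : Fin d → B) (i : Fin d) : zeroExtend x i = x i :=
  Fin.val_injective.extend_apply x 0 i

lemma zeroExtend_of_le {d i : ℕ} (x : Fin d → B) (hi : d ≤ i) : zeroExtend x i = 0 :=
  Function.extend_apply' _ _ _ (by rintro ⟨_, rfl⟩; omega)

lemma prefixIdeal_zeroExtend {d n : ℕ} (hn : n ≤ d) (x : Fin d → B) :
    prefixIdeal (zeroExtend x) n = Ideal.span (x '' {i | (i : ℕ) < n}) := by
  refine congrArg Ideal.span (Set.ext fun b => ⟨?_, ?_⟩)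
  · rintro ⟨i, hi, rfl⟩
    have hin : i < n := Finset.mem_range.1 hi
    exact ⟨⟨i, hin.trans_le hn⟩, hin, (zeroExtend_val x _).symm⟩
  · rintro ⟨i, hi, rfl⟩
    exact ⟨i, Finset.mem_range.2 hi, zeroExtend_val x i⟩

lemma prefixIdeal_zeroExtend_self {d : ℕ} (x : Fin d → B) :
    prefixIdeal (zeroExtend x) d = Ideal.span (Set.range x) := by
  rw [prefixIdeal_zeroExtend le_rfl, ← Set.image_univ]
  simp only [Fin.is_lt, Set.ofPred_true]

lemma span_range_comp_val_eq_prefixIdeal (w : ℕ → B) (d : ℕ) :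
    Ideal.span (Set.range fun i : Fin d => w i) = prefixIdeal w d := by
  rw [← prefixIdeal_zeroExtend_self]
  exact prefixIdeal_congr fun i hi => zeroExtend_val (fun i : Fin d => w i) ⟨i, hi⟩

lemma prefixIdeal_map {C : Type*} [CommRing C] (f : B →+* C) (z : ℕ → B) (n : ℕ) :
    (prefixIdeal z n).map f = prefixIdeal (fun i => f (z i)) n := by
  rw [prefixIdeal, Ideal.map_span, Set.image_image, prefixIdeal]

end ZeroExtend

section PowerSeries

open MvPowerSeries

variable {σ K : Type*}

lemma coeff_eq_zero_of_mem_span_X_image [CommRing K] {S : Set σ} {f : MvPowerSeries σ K}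
    (hf : f ∈ Ideal.span (X '' S)) {m : σ →₀ ℕ} (hm : ∀ j ∈ S, m j = 0) : coeff m f = 0 := by
  classical
  induction hf using Submodule.span_induction generalizing m with
  | mem g hg =>
    obtain ⟨j, hj, rfl⟩ := hg
    exact X_dvd_iff.1 dvd_rfl m (hm j hj)
  | zero => exact map_zero _
  | add g h _ _ hg hh => rw [map_add, hg hm, hh hm, add_zero]
  | smul a g _ hg =>
    rw [smul_eq_mul, coeff_mul]
    refine Finset.sum_eq_zero fun q hq => ?_
    rw [hg fun j hj => ?_, mul_zero]
    have hsum := hm j hj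
    rw [← Finset.HasAntidiagonal.mem_antidiagonal.1 hq, Finsupp.add_apply] at hsum
    exact (add_eq_zero.1 hsum).2

lemma mem_span_X_image_iff [CommRing K] {S : Set σ} (hS : S.Finite) {f : MvPowerSeries σ K} :
    f ∈ Ideal.span (X '' S) ↔ ∀ m : σ →₀ ℕ, (∀ j ∈ S, m j = 0) → coeff m f = 0 := by
  classical
  refine ⟨fun hf m hm => coeff_eq_zero_of_mem_span_X_image hf hm, fun h => ?_⟩
  induction S, hS using Set.Finite.induction_on generalizing f with
  | empty =>
    have hf : f = 0 := MvPowerSeries.ext fun m => h m (by simp)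
    exact hf ▸ zero_mem _
  | @insert i S _ _ ih =>
    -- `r` collects the monomials of `f` that do not involve `X i`.
    let r : MvPowerSeries σ K := fun m => if m i = 0 then coeff m f else 0
    have coeff_r (m : σ →₀ ℕ) : coeff m r = if m i = 0 then coeff m f else 0 := rfl
    have hdvd : X i ∣ f - r := X_dvd_iff.2 fun m hm => by
      rw [map_sub, coeff_r, if_pos hm, sub_self]
    have hr : r ∈ Ideal.span (X '' S) := ih fun m hm => by
      rw [coeff_r]
      split_ifs with hmi
      · exact h m (Set.forall_mem_insert.2 ⟨hmi, hm⟩)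
      · rfl
    rw [Set.image_insert_eq, Ideal.span_insert, ← sub_add_cancel f r]
    exact Submodule.add_mem_sup (Ideal.mem_span_singleton.2 hdvd) hr

lemma isRegularModulo_span_X_image [CommRing K] {S : Set σ} (hS : S.Finite) {i : σ} (hi : i ∉ S) :
    IsRegularModulo (Ideal.span (X '' S)) (X i : MvPowerSeries σ K) := by
  classical
  intro f hf
  rw [mem_span_X_image_iff hS] at hf ⊢
  intro m hm
  have hcoeff := hf (Finsupp.single i 1 + m) fun j hj => by
    rw [Finsupp.add_apply, hm j hj, Finsupp.single_eq_of_ne (ne_of_mem_of_not_mem hj hi)]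
  rwa [X_def, coeff_add_monomial_mul, one_mul] at hcoeff

variable (K) in
lemma isWeaklyRegularSeq_zeroExtend_X [CommRing K] (d : ℕ) :
    IsWeaklyRegularSeq (zeroExtend (X : Fin d → MvPowerSeries (Fin d) K)) (MvPowerSeries (Fin d) K)
      d := by
  refine isWeaklyRegularSeq_self_iff.2 fun n hn => ?_
  have hX : (zeroExtend X n : MvPowerSeries (Fin d) K) = X ⟨n, hn⟩ := zeroExtend_val X ⟨n, hn⟩
  rw [prefixIdeal_zeroExtend hn.le, hX]
  exact isRegularModulo_span_X_image (Set.toFinite _) (lt_irrefl n)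

variable (σ K) [Finite σ] [Field K]

lemma span_range_X_eq_maximalIdeal :
    Ideal.span (Set.range X) = maximalIdeal (MvPowerSeries σ K) := by
  ext f
  rw [← Set.image_univ, mem_span_X_image_iff Set.finite_univ, mem_maximalIdeal, mem_nonunits_iff,
    MvPowerSeries.isUnit_iff_constantCoeff, isUnit_iff_ne_zero, not_not]
  refine ⟨fun h => h 0 fun _ _ => rfl, fun h m hm => ?_⟩
  rwa [show m = 0 from Finsupp.ext fun j => hm j trivial]

lemma ringKrullDim_mvPowerSeries_le : ringKrullDim (MvPowerSeries σ K) ≤ Nat.card σ := by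
  refine (ringKrullDim_le_spanFinrank_maximalIdeal _).trans ?_
  rw [← span_range_X_eq_maximalIdeal, ← Set.image_univ, ← Set.ncard_univ]
  exact_mod_cast (Submodule.spanFinrank_span_le_ncard_of_finite (Set.toFinite _)).trans
    (Set.ncard_image_le Set.finite_univ)

end PowerSeries

section IntegralExtensions

lemma ringKrullDim_le_of_isIntegral (A B : Type*) [CommRing A] [CommRing B] [Algebra A B]
    [Algebra.IsIntegral A B] : ringKrullDim B ≤ ringKrullDim A :=
  Order.krullDim_le_of_strictMono (PrimeSpectrum.comap (algebraMap A B)) fun P Q h =>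
    Ideal.IsIntegral.comap_lt_comap (R := A) (I := P.asIdeal) (J := Q.asIdeal) h

lemma faithfulSMul_of_ringKrullDim_le {A B : Type*} [CommRing A] [IsDomain A] [CommRing B]
    [Algebra A B] [Algebra.IsIntegral A B] {d : ℕ} (hA : ringKrullDim A ≤ d)
    (hB : ringKrullDim B = d) : FaithfulSMul A B := by
  rw [faithfulSMul_iff_algebraMap_injective, injective_iff_map_eq_zero]
  intro r hr
  by_contra hr0
  have hquot := ringKrullDim_succ_le_of_surjective (Algebra.ofId A B).rangeRestrict.toRingHom
    (Algebra.ofId A B).rangeRestrict_surjective (mem_nonZeroDivisors_of_ne_zero hr0)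
    (Subtype.ext hr)
  have : Algebra.IsIntegral (Algebra.ofId A B).range B := .tower_top A
  have hrange := ringKrullDim_le_of_isIntegral (Algebra.ofId A B).range B
  rw [hB] at hrange
  have hlt : ((d : WithBot ℕ∞) + 1) ≤ d := (add_le_add_left hrange 1).trans (hquot.trans hA)
  have : d + 1 ≤ d := by exact_mod_cast hlt
  omega

variable {A R : Type*} [CommRing A] [CommRing R] [Algebra A R] {z : ℕ → A} {k : ℕ}

lemma IsWeaklyRegularSeq.of_linearEquiv {M N : Type*} [AddCommGroup M] [AddCommGroup N]
    [Module A M] [Module A N] (e : M ≃ₗ[A] N) (h : IsWeaklyRegularSeq z M k) :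
    IsWeaklyRegularSeq z N k := by
  have mem_iff (n : ℕ) (w : N) : w ∈ prefixIdeal z n • (⊤ : Submodule A N) ↔
      e.symm w ∈ prefixIdeal z n • (⊤ : Submodule A M) := by
    rw [← Submodule.mem_map_equiv, Submodule.map_smul'', Submodule.map_top, LinearEquiv.range]
  intro n hn w hw
  rw [mem_iff] at hw ⊢
  exact h n hn _ (map_smul e.symm (z n) w ▸ hw)

lemma IsWeaklyRegularSeq.map_algebraMap {M : Type*} [AddCommGroup M] [Module A M] [Module R M]
    [IsScalarTower A R M] (h : IsWeaklyRegularSeq z M k) :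
    IsWeaklyRegularSeq (fun i => algebraMap A R (z i)) M k := by
  have mem_iff (n : ℕ) (w : M) :
      w ∈ prefixIdeal (fun i => algebraMap A R (z i)) n • (⊤ : Submodule R M) ↔
        w ∈ prefixIdeal z n • (⊤ : Submodule A M) := by
    rw [← prefixIdeal_map, ← Submodule.restrictScalars_mem A, Ideal.smul_restrictScalars,
      Submodule.restrictScalars_top]
  intro n hn w hw
  rw [mem_iff] at hw ⊢
  exact h n hn w (algebraMap_smul R (z n) w ▸ hw)

lemma IsWeaklyRegularSeq.congr {M : Type*} [AddCommGroup M] [Module A M] {z' : ℕ → A}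
    (h : IsWeaklyRegularSeq z M k) (hz : ∀ i < k, z i = z' i) : IsWeaklyRegularSeq z' M k := by
  intro n hn w
  rw [← hz n hn, ← prefixIdeal_congr fun i hi => hz i (hi.trans hn)]
  exact h n hn w

lemma isIntegralClosure_integralClosure_of_isIntegral (A R L : Type*) [CommRing A] [CommRing R]
    [CommRing L] [Algebra A R] [Algebra R L] [Algebra A L] [IsScalarTower A R L]
    [Algebra.IsIntegral A R] :
    IsIntegralClosure (integralClosure R L) A L where
  algebraMap_injective := Subtype.val_injective
  isIntegral_iff {x} := by
    refine ⟨fun hx => ⟨⟨x, hx.tower_top⟩, rfl⟩, ?_⟩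
    rintro ⟨y, rfl⟩
    exact isIntegral_trans (A := R) _ y.2

end IntegralExtensions

section CompleteLocal

open MvPowerSeries

variable {R : Type u} [CommRing R] [IsNoetherianRing R] [IsLocalRing R]
  [IsAdicComplete (maximalIdeal R) R]

theorem exists_finite_mvPowerSeries_hom (p : ℕ) [Fact p.Prime] [CharP R p] {σ : Type*} [Finite σ]
    {w : σ → R} (hw : (Ideal.span (Set.range w)).radical = maximalIdeal R) :
    ∃ φ : MvPowerSeries σ (ResidueField R) →+* R, φ.Finite ∧ ∀ i, φ (X i) = w i := by
  obtain ⟨g, hg⟩ := exists_coefficientField (R := R) p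
  obtain ⟨φ, hC, hX⟩ := exists_mvPowerSeries_evalHom g fun i =>
    hw ▸ Ideal.le_radical (Ideal.subset_span (Set.mem_range_self i))
  refine ⟨φ, ?_, hX⟩
  algebraize [φ]
  refine finite_of_radical_map_eq (I := Ideal.span (Set.range X)) (J := maximalIdeal R) ?_
    fun r => ⟨C (residue R r), ?_⟩
  · rw [Ideal.map_span, ← Set.range_comp, ← hw]
    exact congrArg (fun v => (Ideal.span (Set.range v)).radical) (funext hX)
  · rw [← residue_eq_zero_iff, map_sub, RingHom.algebraMap_toAlgebra, hC, hg, sub_self]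

theorem isWeaklyRegularSeq_integralClosure_of_radical_eq (p : ℕ) [Fact p.Prime] [CharP R p]
    {L : Type u} [Field L] [IsAlgClosed L] [Algebra R L] [FaithfulSMul R L] {d : ℕ}
    (hd : ringKrullDim R = d) {w : ℕ → R} (hw : (prefixIdeal w d).radical = maximalIdeal R) :
    IsWeaklyRegularSeq w (integralClosure R L) d := by
  rw [← span_range_comp_val_eq_prefixIdeal] at hw
  obtain ⟨φ, hφ, hX⟩ := exists_finite_mvPowerSeries_hom p hw
  algebraize [φ, (algebraMap R L).comp φ]
  have : IsDomain (MvPowerSeries (Fin d) (ResidueField R)) := NoZeroDivisors.to_isDomain _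
  have : FaithfulSMul (MvPowerSeries (Fin d) (ResidueField R)) R :=
    faithfulSMul_of_ringKrullDim_le
      ((ringKrullDim_mvPowerSeries_le _ _).trans_eq (by rw [Nat.card_fin])) hd
  have : FaithfulSMul (MvPowerSeries (Fin d) (ResidueField R)) L := .trans _ R L
  have : CharP L p := charP_of_injective_ringHom (FaithfulSMul.algebraMap_injective R L) p
  have := isIntegralClosure_integralClosure_of_isIntegral
    (MvPowerSeries (Fin d) (ResidueField R)) R L
  have hreg : IsWeaklyRegularSeq (zeroExtend X)
      (integralClosure (MvPowerSeries (Fin d) (ResidueField R)) L) d :=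
    isWeaklyRegularSeq_integralClosure
      (prefixIdeal_zeroExtend_self _ |>.trans (span_range_X_eq_maximalIdeal _ _))
      (isWeaklyRegularSeq_zeroExtend_X _ d) p
  refine ((hreg.of_linearEquiv (IsIntegralClosure.equiv _ _ L
    (integralClosure R L)).toLinearEquiv).map_algebraMap (R := R)).congr fun i hi => ?_
  exact (congrArg φ (zeroExtend_val X ⟨i, hi⟩)).trans (hX ⟨i, hi⟩)

end CompleteLocal

/-! ### Extending systems of parameters -/

section SystemsOfParameters

lemma ringKrullDim_quotient_sup_span_singleton_succ_le {R : Type*} [CommRing R]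
    [IsNoetherianRing R] {J : Ideal R} {z : R} (hz : ∀ P ∈ J.minimalPrimes, z ∉ P) :
    ringKrullDim (R ⧸ J ⊔ Ideal.span {z}) + 1 ≤ ringKrullDim (R ⧸ J) := by
  have hsupport : Module.support R (QuotSMulTop z (R ⧸ J)) =
      PrimeSpectrum.zeroLocus (J ⊔ Ideal.span {z} : Ideal R) := by
    rw [Module.support_quotSMulTop, Module.support_eq_zeroLocus, Ideal.annihilator_quotient,
      PrimeSpectrum.zeroLocus_sup, PrimeSpectrum.zeroLocus_span]
  have hdim := Module.supportDim_quotSMulTop_succ_le_of_notMem_minimalPrimes (M := R ⧸ J)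
    (x := z) (by rwa [Ideal.annihilator_quotient])
  rwa [Module.supportDim, hsupport, ← ringKrullDim_quotient,
    Module.supportDim_quotient_eq_ringKrullDim] at hdim

lemma exists_prefixIdeal_eq_span {B : Type*} [CommRing B] (s : Finset B) {c : ℕ}
    (hs : s.card ≤ c) : ∃ v : ℕ → B, prefixIdeal v c = Ideal.span s := by
  let e : Fin s.card ≃ s := s.equivFin.symm
  refine ⟨zeroExtend fun j => (e j : B), le_antisymm (prefixIdeal_le fun i _ => ?_) ?_⟩
  · obtain hi | hi := lt_or_ge i s.card
    · rw [zeroExtend_val (fun j => (e j : B)) ⟨i, hi⟩]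
      exact Ideal.subset_span (e ⟨i, hi⟩).2
    · rw [zeroExtend_of_le _ hi]
      exact zero_mem _
  · refine Ideal.span_mono fun b hb => ⟨e.symm ⟨b, hb⟩, ?_, ?_⟩
    · exact Finset.mem_range.2 ((e.symm ⟨b, hb⟩).2.trans_le hs)
    · rw [zeroExtend_val, e.apply_symm_apply]

lemma prefixIdeal_add {B : Type*} [CommRing B] (w : ℕ → B) (n m : ℕ) :
    prefixIdeal w (n + m) = prefixIdeal w n ⊔ prefixIdeal (fun i => w (n + i)) m := by
  induction m with
  | zero => rw [add_zero, prefixIdeal_zero, sup_bot_eq]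
  | succ m ih => rw [← add_assoc, prefixIdeal_succ, ih, prefixIdeal_succ, sup_left_comm]

variable {R : Type*} [CommRing R] [IsLocalRing R]

lemma maximalIdeal_mem_minimalPrimes_iff {I : Ideal R} :
    maximalIdeal R ∈ I.minimalPrimes ↔ I.radical = maximalIdeal R := by
  rw [← Ideal.radical_minimalPrimes]
  constructor
  · intro h
    refine le_antisymm h.1.2 (Ideal.sInf_minimalPrimes (I := I) ▸ le_sInf fun P hP => ?_)
    rw [← Ideal.radical_minimalPrimes] at hP
    exact h.2 hP.1 (le_maximalIdeal hP.1.1.ne_top)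
  · intro h
    rw [h, Ideal.minimalPrimes_eq_subsingleton_self]
    rfl

lemma radical_map_mk_eq_maximalIdeal_iff {J I : Ideal R} [IsLocalRing (R ⧸ J)] :
    (I.map (Ideal.Quotient.mk J)).radical = maximalIdeal (R ⧸ J) ↔
      (J ⊔ I).radical = maximalIdeal R := by
  have hmk : Function.Surjective (Ideal.Quotient.mk J) := Ideal.Quotient.mk_surjective
  rw [← (Ideal.comap_injective_of_surjective _ hmk).eq_iff, Ideal.comap_radical,
    Ideal.comap_map_of_surjective _ hmk, ← RingHom.ker_eq_comap_bot, Ideal.mk_ker, sup_comm,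
    eq_maximalIdeal (Ideal.comap_isMaximal_of_surjective _ hmk)]

variable [IsNoetherianRing R]

lemma ringKrullDim_le_of_radical_prefixIdeal_eq {v : ℕ → R} {c : ℕ}
    (hv : (prefixIdeal v c).radical = maximalIdeal R) : ringKrullDim R ≤ c := by
  rw [← maximalIdeal_height_eq_ringKrullDim]
  have hheight := Ideal.height_le_card_of_mem_minimalPrimes_span (Set.toFinite _)
    (maximalIdeal_mem_minimalPrimes_iff.2 hv)
  have hcard : (v '' (Finset.range c : Set ℕ)).ncard ≤ c := by
    simpa using Set.ncard_image_le (f := v) (Finset.range c).finite_toSet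
  exact_mod_cast hheight.trans (Nat.cast_le.2 hcard)

lemma exists_radical_prefixIdeal_eq {c : ℕ} (hc : ringKrullDim R ≤ c) :
    ∃ v : ℕ → R, (prefixIdeal v c).radical = maximalIdeal R := by
  obtain ⟨s, hs, hcard⟩ := (maximalIdeal R).exists_finset_card_eq_height_of_isNoetherianRing
  rw [← maximalIdeal_height_eq_ringKrullDim, ← hcard] at hc
  obtain ⟨v, hv⟩ := exists_prefixIdeal_eq_span s (by exact_mod_cast hc)
  exact ⟨v, hv ▸ maximalIdeal_mem_minimalPrimes_iff.1 hs⟩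

lemma ringKrullDim_quotient_le_of_radical_sup_eq {J : Ideal R} {v : ℕ → R} {c : ℕ}
    (hv : (J ⊔ prefixIdeal v c).radical = maximalIdeal R) : ringKrullDim (R ⧸ J) ≤ c := by
  have hJ : J ≤ maximalIdeal R := hv ▸ le_sup_left.trans Ideal.le_radical
  have : Nontrivial (R ⧸ J) :=
    Ideal.Quotient.nontrivial_iff.2 (ne_top_of_le_ne_top Ideal.IsPrime.ne_top' hJ)
  have : IsLocalRing (R ⧸ J) := .of_surjective' _ Ideal.Quotient.mk_surjective
  refine ringKrullDim_le_of_radical_prefixIdeal_eq (v := fun i => Ideal.Quotient.mk J (v i)) ?_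
  rwa [← prefixIdeal_map, radical_map_mk_eq_maximalIdeal_iff]

lemma exists_radical_sup_prefixIdeal_eq {J : Ideal R} (hJ : J ≠ ⊤) {c : ℕ}
    (hc : ringKrullDim (R ⧸ J) ≤ c) :
    ∃ v : ℕ → R, (J ⊔ prefixIdeal v c).radical = maximalIdeal R := by
  have : Nontrivial (R ⧸ J) := Ideal.Quotient.nontrivial_iff.2 hJ
  have : IsLocalRing (R ⧸ J) := .of_surjective' _ Ideal.Quotient.mk_surjective
  obtain ⟨v, hv⟩ := exists_radical_prefixIdeal_eq hc
  choose v' hv' using fun i => Ideal.Quotient.mk_surjective (v i)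
  refine ⟨v', ?_⟩
  rw [← radical_map_mk_eq_maximalIdeal_iff, prefixIdeal_map, funext hv', hv]

theorem exists_radical_prefixIdeal_eq_of_notMem_minimalPrimes {x : ℕ → R} {n d : ℕ} (hnd : n ≤ d)
    (hx : (prefixIdeal x d).radical = maximalIdeal R) {z : R} (hzm : z ∈ maximalIdeal R)
    (hz : ∀ P ∈ (prefixIdeal x n).minimalPrimes, z ∉ P) :
    n < d ∧ ∃ w : ℕ → R, (∀ i < n, w i = x i) ∧ w n = z ∧
      (prefixIdeal w d).radical = maximalIdeal R := by
  obtain ⟨c, rfl⟩ := Nat.exists_eq_add_of_le hnd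
  rw [prefixIdeal_add] at hx
  have hle : prefixIdeal x n ⊔ Ideal.span {z} ≤ maximalIdeal R :=
    sup_le (hx ▸ le_sup_left.trans Ideal.le_radical) ((Ideal.span_singleton_le_iff_mem _).2 hzm)
  have hne : prefixIdeal x n ⊔ Ideal.span {z} ≠ ⊤ := ne_top_of_le_ne_top Ideal.IsPrime.ne_top' hle
  have hdim : ringKrullDim (R ⧸ prefixIdeal x n ⊔ Ideal.span {z}) + 1 ≤ c :=
    (ringKrullDim_quotient_sup_span_singleton_succ_le hz).trans
      (ringKrullDim_quotient_le_of_radical_sup_eq hx)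
  obtain _ | c := c
  · have := Ideal.Quotient.nontrivial_iff.2 hne
    have hnonneg := ringKrullDim_nonneg_of_nontrivial (R := R ⧸ prefixIdeal x n ⊔ Ideal.span {z})
    exact absurd ((add_le_add_left hnonneg 1).trans hdim) (by norm_num)
  obtain ⟨v, hv⟩ := exists_radical_sup_prefixIdeal_eq (c := c) hne
    (ENat.WithBot.add_le_add_one_right_iff.1 (by exact_mod_cast hdim))
  refine ⟨by omega, fun i => if i < n then x i else if i = n then z else v (i - (n + 1)),
    fun i hi => if_pos hi, by simp, ?_⟩
  rw [← add_assoc, add_right_comm, prefixIdeal_add, prefixIdeal_succ, ← hv]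
  congr 2
  · rw [sup_comm, if_neg (lt_irrefl n), if_pos rfl, prefixIdeal_congr fun i hi => if_pos hi]
  · refine prefixIdeal_congr fun i _ => ?_
    rw [if_neg (by omega), if_neg (by omega), Nat.add_sub_cancel_left]

end SystemsOfParameters

/-! ### Decomposing the extended parameter ideal -/

section PrimeAvoidance

variable {R : Type*} [CommRing R]

lemma exists_notMem_mul_pow_mem_of_mem_minimalPrimes {J P : Ideal R} (hP : P ∈ J.minimalPrimes)
    {y : R} (hy : y ∈ P) : ∃ s ∉ P, ∃ k, s * y ^ k ∈ J := by
  have : P.IsPrime := hP.1.1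
  have hrad : algebraMap R (Localization.AtPrime P) y ∈
      (J.map (algebraMap R (Localization.AtPrime P))).radical := by
    rw [IsLocalization.AtPrime.radical_map_of_mem_minimalPrimes (Localization.AtPrime P) P J hP]
    exact Ideal.mem_map_of_mem _ hy
  obtain ⟨k, hk⟩ := hrad
  rw [← map_pow, IsLocalization.algebraMap_mem_map_algebraMap_iff P.primeCompl] at hk
  obtain ⟨s, hsP, hs⟩ := hk
  exact ⟨s, hsP, k, hs⟩

lemma exists_forall_mul_pow_mem [IsNoetherianRing R] (J : Ideal R) (y : R) :
    ∃ N : ℕ, 0 < N ∧ ∀ k s, s * y ^ k ∈ J → s * y ^ N ∈ J := by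
  have mul_pow_mem {a b : ℕ} (hab : a ≤ b) {s : R} (hs : s * y ^ a ∈ J) : s * y ^ b ∈ J := by
    rw [← Nat.add_sub_cancel' hab, pow_add, ← mul_assoc]
    exact J.mul_mem_right _ hs
  have mem_colon (k : ℕ) (s : R) : s ∈ J.colon {y ^ k} ↔ s * y ^ k ∈ J :=
    Submodule.mem_colon_singleton
  let saturation : ℕ →o Ideal R := ⟨fun k => J.colon {y ^ k}, fun a b hab s hs =>
    (mem_colon b s).2 (mul_pow_mem hab ((mem_colon a s).1 hs))⟩
  obtain ⟨N, hN⟩ := monotone_stabilizes_iff_noetherian.2 ‹IsNoetherianRing R› saturation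
  refine ⟨N + 1, N.succ_pos, fun k s hs => mul_pow_mem N.le_succ ((mem_colon N s).1 ?_)⟩
  have hmax : s ∈ saturation (max N k) :=
    (mem_colon _ s).2 (mul_pow_mem (le_max_right N k) hs)
  rwa [← hN _ (le_max_left N k)] at hmax

lemma exists_mul_pow_mem_and_add_notMem_minimalPrimes [IsNoetherianRing R] (J : Ideal R) (y : R) :
    ∃ N : ℕ, 0 < N ∧ ∃ s r : R, s * y ^ N ∈ J ∧ ∀ P ∈ J.minimalPrimes, s + r * y ^ N ∉ P := by
  obtain ⟨N, hNpos, hN⟩ := exists_forall_mul_pow_mem J y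
  have hnot_le : ∀ P ∈ J.minimalPrimes, ¬ J.colon {y ^ N} ⊔ Ideal.span {y ^ N} ≤ P := by
    intro P hP hle
    have hyP : y ∈ P := hP.1.1.mem_of_pow_mem N
      (hle (Ideal.mem_sup_right (Ideal.mem_span_singleton_self _)))
    obtain ⟨s, hsP, k, hs⟩ := exists_notMem_mul_pow_mem_of_mem_minimalPrimes hP hyP
    exact hsP (hle (Ideal.mem_sup_left (Submodule.mem_colon_singleton.2 (hN k s hs))))
  obtain ⟨z, hz, hzP⟩ : ∃ z ∈ J.colon {y ^ N} ⊔ Ideal.span {y ^ N},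
      ∀ P ∈ J.minimalPrimes, z ∉ P := by
    by_contra! hcon
    obtain ⟨P, hP, hle⟩ := (Ideal.subset_union_prime_finite
      (J.finite_minimalPrimes_of_isNoetherianRing R) ⊥ ⊥ (fun P hP _ _ => hP.1.1)).1
      (fun z hz => by
        obtain ⟨P, hP, hzP⟩ := hcon z hz
        exact Set.mem_biUnion hP hzP)
    exact hnot_le P hP hle
  obtain ⟨s, hs, _, ht, rfl⟩ := Submodule.mem_sup.1 hz
  obtain ⟨r, rfl⟩ := Ideal.mem_span_singleton'.1 ht
  exact ⟨N, hNpos, s, r, Submodule.mem_colon_singleton.1 hs, hzP⟩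

end PrimeAvoidance

lemma eq_sup_span_singleton_inf_colon_of_isRegularModulo {T : Type*} [CommRing T] {J : Ideal T}
    {s r y : T} (hs : s * y ∈ J) (hreg : IsRegularModulo J (s + r * y)) :
    J = (J ⊔ Ideal.span {y}) ⊓ J.colon (Ideal.span {y}) := by
  have mem_of_mul_mem {u : T} (hu : u * y * y ∈ J) : u * y ∈ J := by
    refine hreg _ ?_
    rw [show (s + r * y) * (u * y) = u * (s * y) + r * (u * y * y) by ring]
    exact add_mem (J.mul_mem_left _ hs) (J.mul_mem_left _ hu)
  refine le_antisymm (le_inf le_sup_left fun a ha => ?_) ?_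
  · exact Submodule.mem_colon.2 fun b _ => J.mul_mem_right b ha
  · rintro a ⟨hsup, hcolon⟩
    obtain ⟨j, hj, _, ht, rfl⟩ := Submodule.mem_sup.1 hsup
    obtain ⟨u, rfl⟩ := Ideal.mem_span_singleton'.1 ht
    have hmul : (j + u * y) * y ∈ J :=
      Submodule.mem_colon.1 hcolon y (Ideal.mem_span_singleton_self y)
    rw [add_mul] at hmul
    exact add_mem hj (mem_of_mul_mem ((J.add_mem_iff_right (J.mul_mem_right _ hj)).1 hmul))

theorem isRegularModulo_map_integralClosure {R L : Type u} [CommRing R] [IsNoetherianRing R]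
    [IsLocalRing R] [IsAdicComplete (maximalIdeal R) R] (p : ℕ) [Fact p.Prime] [CharP R p]
    [Field L] [IsAlgClosed L] [Algebra R L] [FaithfulSMul R L] {n d : ℕ} (hnd : n ≤ d)
    (hd : ringKrullDim R = d) {x : ℕ → R} (hx : (prefixIdeal x d).radical = maximalIdeal R) {z : R}
    (hz : ∀ P ∈ (prefixIdeal x n).minimalPrimes, z ∉ P) :
    IsRegularModulo ((prefixIdeal x n).map (algebraMap R (integralClosure R L)))
      (algebraMap R (integralClosure R L) z) := by
  by_cases hunit : IsUnit z
  · exact fun w => (Ideal.unit_mul_mem_iff_mem _ (hunit.map _)).1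
  · obtain ⟨hlt, w, hwx, rfl, hw⟩ := exists_radical_prefixIdeal_eq_of_notMem_minimalPrimes hnd hx
      ((mem_maximalIdeal z).2 hunit) hz
    have hreg := isWeaklyRegularSeq_algebra_iff.1
      (isWeaklyRegularSeq_integralClosure_of_radical_eq p (L := L) hd hw) n hlt
    rwa [powerIdeal_algebraPow_one, prefixIdeal_congr hwx] at hreg

/-- For a `d`-dimensional complete local domain `R` of characteristic `p`,
there is `N₀ ≥ 1` with `(x₁, …, xₙ)R⁺ = 𝔞 ∩ 𝔟`, where `𝔞 = (x₁, …, xₙ, y^{N₀})R⁺` and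
`𝔟 = (x₁, …, xₙ)R⁺ : y^{N₀}`. -/
theorem stmt18 (R : Type) [CommRing R] [IsDomain R] [IsNoetherianRing R] [IsLocalRing R]
    [IsAdicComplete (maximalIdeal R) R]
    (p : ℕ) [Fact p.Prime] [CharP R p]
    (d : ℕ) (x : Fin d → R) (hx : IsSOP R x)
    (n : ℕ) (hn1 : 1 ≤ n) (hnd : n ≤ d) (y : R) :
    ∃ N₀ : ℕ, 0 < N₀ ∧
      Ideal.span (⇑(algebraMap R (RPlus R)) '' (x '' {i | (i : ℕ) < n})) =
        (Ideal.span (⇑(algebraMap R (RPlus R)) '' (x '' {i | (i : ℕ) < n})) ⊔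
            Ideal.span {algebraMap R (RPlus R) y ^ N₀}) ⊓
          (Ideal.span (⇑(algebraMap R (RPlus R)) '' (x '' {i | (i : ℕ) < n}))).colon
            (Ideal.span {algebraMap R (RPlus R) y ^ N₀}) := by
  have hrad : (prefixIdeal (zeroExtend x) d).radical = maximalIdeal R :=
    prefixIdeal_zeroExtend_self x ▸ hx.2
  have : FaithfulSMul R (AlgebraicClosure (FractionRing R)) := .trans R (FractionRing R) _
  obtain ⟨N, hNpos, s, r, hs, hz⟩ :=
    exists_mul_pow_mem_and_add_notMem_minimalPrimes (prefixIdeal (zeroExtend x) n) y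
  have hreg := isRegularModulo_map_integralClosure p (L := AlgebraicClosure (FractionRing R))
    hnd hx.1 hrad hz
  rw [map_add, map_mul] at hreg
  refine ⟨N, hNpos, ?_⟩
  rw [← Ideal.map_span, ← prefixIdeal_zeroExtend hnd, ← map_pow]
  exact eq_sup_span_singleton_inf_colon_of_isRegularModulo
    (map_mul (algebraMap R (RPlus R)) _ _ ▸ Ideal.mem_map_of_mem _ hs) hreg
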